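/- arXiv:gr-qc/9812061 — 6 statements merged into one kernel-verified Lean document; each statement's English description precedes it below -/
import Mathlib

section
/- Let φ : (0,∞) → [0,∞) be measurable with φ(E) = 0 for E ≥ E₀ for some E₀ > 0, and on every compact subset of (0,∞) bounded by C(E₀−E)₊^k for some k > −1. Let l > −1/2 with k + l + 3/2 > 0, and let μ₀ ∈ ℝ. Then there exists a unique pair (λ, μ) ∈ C¹([0,∞))² with λ(0) = 0 and μ(0) = μ₀ satisfying, for all r > 0, e^{−2λ(r)}(2rλ'(r) − 1) + 1 = 16π² c_{l,−1/2} r^{2l+2} H_l(e^{μ(r)}) and e^{−2λ(r)}(2rμ'(r) + 1) − 1 = 16π² c_{l,1/2} r^{2l+2} e^{−(2l+4)μ(r)} h_{l+3/2}(e^{μ(r)}), where h_m(u) = ∫_u^{E₀} φ(E)(E² − u²)^m dE, H_l(e^{μ}) = e^{−(2l+4)μ} h_{l+3/2}(e^{μ}) + e^{−(2l+2)μ} h_{l+1/2}(e^{μ}), and c_{a,b} = ∫₀¹ s^a(1−s)^b ds. -/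
open MeasureTheory Real Set

/-- The constant `c_{a,b} = ∫₀¹ s^a (1-s)^b ds`. -/
noncomputable def cab (a b : ℝ) : ℝ := ∫ s in (0:ℝ)..1, s ^ a * (1 - s) ^ b

/-- The function `h_m(u) = ∫_u^{E₀} φ(E) (E² - u²)^m dE`. -/
noncomputable def hfun (φ : ℝ → ℝ) (E₀ m u : ℝ) : ℝ :=
  ∫ E in u..E₀, φ E * (E ^ 2 - u ^ 2) ^ m

/-- `(λ, μ)` is a `C¹` solution on `[0,∞)` of the reduced static spherically
symmetric Vlasov-Einstein problem with a regular center and `μ(0) = μ₀`. -/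
def IsReducedVESolution (E₀ l : ℝ) (φ : ℝ → ℝ) (μ₀ : ℝ) (lam mu : ℝ → ℝ) : Prop :=
  lam 0 = 0 ∧ mu 0 = μ₀ ∧
    ContDiffOn ℝ 1 lam (Set.Ici 0) ∧ ContDiffOn ℝ 1 mu (Set.Ici 0) ∧
    (∀ r ∈ Set.Ioi (0 : ℝ),
      Real.exp (-2 * lam r) * (2 * r * deriv lam r - 1) + 1 =
        16 * Real.pi ^ 2 * cab l (-(1/2)) * r ^ (2 * l + 2) *
          (Real.exp (-(2 * l + 4) * mu r) * hfun φ E₀ (l + 3/2) (Real.exp (mu r)) +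
            Real.exp (-(2 * l + 2) * mu r) * hfun φ E₀ (l + 1/2) (Real.exp (mu r)))) ∧
    (∀ r ∈ Set.Ioi (0 : ℝ),
      Real.exp (-2 * lam r) * (2 * r * deriv mu r + 1) - 1 =
        16 * Real.pi ^ 2 * cab l (1/2) * r ^ (2 * l + 2) *
          Real.exp (-(2 * l + 4) * mu r) * hfun φ E₀ (l + 3/2) (Real.exp (mu r)))

/-! ### Profiles and the abstract radial system -/

/-- A nonnegative, nonincreasing, continuous function that vanishes on `[y₁, ∞)` and is Lipschitz on
`[y₀, z]` for every `z < y₁`. -/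
structure IsProfile (y₀ y₁ : ℝ) (g : ℝ → ℝ) : Prop where
  nonneg : ∀ y, 0 ≤ g y
  anti : Antitone g
  cont : Continuous g
  zero : ∀ y, y₁ ≤ y → g y = 0
  lip : ∀ z < y₁, ∃ L, 0 ≤ L ∧ ∀ a b, y₀ ≤ a → a ≤ b → b ≤ z → g a - g b ≤ L * (b - a)

/-- The data of the radial system `(r (1 - x))' = r ^ n g(μ)`, `x (2 r μ' + 1) - 1 = r ^ n q(μ)`,
`x(0) = 1`, `μ(0) = y₀`. -/
structure RadialSystem where
  (n y₀ y₁ : ℝ)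
  (g q : ℝ → ℝ)
  one_lt : 1 < n
  le : y₀ ≤ y₁
  hg : IsProfile y₀ y₁ g
  hq : IsProfile y₀ y₁ q

/-- The power `r ^ n` on `[0, ∞)`, extended by `0`. -/
noncomputable def posPow (n r : ℝ) : ℝ := (max r 0) ^ n

lemma posPow_nonneg (n r : ℝ) : 0 ≤ posPow n r := Real.rpow_nonneg (le_max_right _ _) _

lemma posPow_of_nonneg {n r : ℝ} (hr : 0 ≤ r) : posPow n r = r ^ n := by
  rw [posPow, max_eq_left hr]

lemma posPow_of_nonpos {n r : ℝ} (hn : 0 < n) (hr : r ≤ 0) : posPow n r = 0 := by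
  rw [posPow, max_eq_right hr, Real.zero_rpow hn.ne']

lemma continuous_posPow {n : ℝ} (hn : 0 < n) : Continuous (posPow n) :=
  (continuous_id.max continuous_const).rpow_const fun _ => Or.inr hn.le

lemma posPow_mono {n : ℝ} (hn : 0 < n) : Monotone (posPow n) := fun _ _ h =>
  Real.rpow_le_rpow (le_max_right _ _) (max_le_max_right 0 h) hn.le

lemma posPow_eq_mul {n r : ℝ} (hn : 1 < n) : posPow n r = r * posPow (n - 1) r := by
  rcases le_or_gt r 0 with h | h
  · rw [posPow_of_nonpos (by linarith) h, posPow_of_nonpos (by linarith) h, mul_zero]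
  · rw [posPow_of_nonneg h.le, posPow_of_nonneg h.le, mul_comm, ← Real.rpow_add_one h.ne']
    ring_nf

lemma hasDerivAt_posPow {n r : ℝ} (hr : 0 < r) : HasDerivAt (posPow n) (n * r ^ (n - 1)) r := by
  refine (Real.hasDerivAt_rpow_const (Or.inl hr.ne')).congr_of_eventuallyEq ?_
  filter_upwards [Ioi_mem_nhds hr] with s hs
  exact posPow_of_nonneg (le_of_lt hs)

/-- If `ψ` starts nonnegative and has nonnegative derivative wherever it is negative, it stays
nonnegative. -/
lemma nonneg_of_deriv_nonneg_of_neg {ψ ψ' : ℝ → ℝ} {R : ℝ} (hR : 0 ≤ R)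
    (hc : ContinuousOn ψ (Icc 0 R)) (h0 : 0 ≤ ψ 0)
    (hd : ∀ r, 0 < r → ψ r < 0 → HasDerivAt ψ (ψ' r) r ∧ 0 ≤ ψ' r) : 0 ≤ ψ R := by
  by_contra! hneg
  have hK : IsCompact (Icc 0 R ∩ ψ ⁻¹' Ici 0) :=
    isCompact_Icc.of_isClosed_subset (hc.preimage_isClosed_of_isClosed isClosed_Icc isClosed_Ici)
      inter_subset_left
  obtain ⟨t, ⟨⟨ht0, htR⟩, htψ⟩, hmax⟩ := hK.exists_isGreatest ⟨0, ⟨⟨le_rfl, hR⟩, h0⟩⟩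
  have hlt : ∀ r, t < r → r ≤ R → ψ r < 0 := by
    intro r htr hrR
    by_contra! h
    exact absurd (hmax ⟨⟨ht0.trans htr.le, hrR⟩, h⟩) (not_le.2 htr)
  have hmono : MonotoneOn ψ (Icc t R) := by
    refine monotoneOn_of_hasDerivWithinAt_nonneg (f' := ψ') (convex_Icc t R)
      (hc.mono (Icc_subset_Icc_left ht0)) ?_ ?_ <;>
    · intro r hr
      rw [interior_Icc] at hr
      have := hd r (ht0.trans_lt hr.1) (hlt r hr.1 hr.2.le)
      first | exact this.1.hasDerivWithinAt | exact this.2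
  have := hmono ⟨le_rfl, htR⟩ ⟨htR, le_rfl⟩ htR
  exact absurd (le_trans htψ this) (not_le.2 hneg)

/-- An antitone self-map of a complete lattice has a two-cycle enclosing all its fixed points. -/
lemma exists_two_cycle_of_antitone {α : Type*} [CompleteLattice α] {T : α → α} (hT : Antitone T) :
    ∃ a b, a ≤ b ∧ T a = b ∧ T b = a ∧ ∀ c, T c = c → a ≤ c ∧ c ≤ b := by
  let f : α →o α := ⟨T ∘ T, hT.comp hT⟩
  have hf : T (T f.lfp) = f.lfp := f.map_lfp
  refine ⟨f.lfp, T f.lfp, f.lfp_le_fixed (congrArg T hf), rfl, hf, fun c hc => ?_⟩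
  have h : f.lfp ≤ c := f.lfp_le_fixed (show T (T c) = c by rw [hc, hc])
  exact ⟨h, hc ▸ hT h⟩

namespace RadialSystem

variable (S : RadialSystem) {f h : ℝ → ℝ}

lemma n_pos : 0 < S.n := one_pos.trans S.one_lt

/-- Admissible potentials: nondecreasing and bounded below by the central value. -/
def Adm (f : ℝ → ℝ) : Prop := Monotone f ∧ ∀ r, S.y₀ ≤ f r

/-- The mass function `r (1 - x(r))` generated by the potential `f`. -/
noncomputable def mass (f : ℝ → ℝ) (r : ℝ) : ℝ := ∫ s in (0 : ℝ)..r, posPow S.n s * S.g (f s)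

/-- The metric coefficient `x = e^{-2λ}` generated by the potential `f`. -/
noncomputable def coeff (f : ℝ → ℝ) (r : ℝ) : ℝ := 1 - S.mass f r / r

/-- An a priori lower bound for `x` along solutions. -/
noncomputable def lower (r : ℝ) : ℝ :=
  1 / 2 * Real.exp (-(4 * S.g S.y₀ * posPow S.n r * (S.y₁ - S.y₀)))

/-- The coefficient `x` truncated at its a priori lower bound. -/
noncomputable def coeffReg (f : ℝ → ℝ) (r : ℝ) : ℝ := max (S.coeff f r) (S.lower r)

/-- The slope of the next potential. -/
noncomputable def slope (f : ℝ → ℝ) (r : ℝ) : ℝ :=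
  ((1 + posPow S.n r * S.q (f r)) / S.coeffReg f r - 1) / (2 * r)

/-- The integral operator whose fixed points are the solutions. -/
noncomputable def op (f : ℝ → ℝ) (r : ℝ) : ℝ := S.y₀ + ∫ s in (0 : ℝ)..r, S.slope f s

lemma lower_pos (r : ℝ) : 0 < S.lower r := by unfold lower; positivity

lemma lower_le_half (r : ℝ) : S.lower r ≤ 1 / 2 := by
  have h1 : 0 ≤ 4 * S.g S.y₀ * posPow S.n r * (S.y₁ - S.y₀) :=
    mul_nonneg (mul_nonneg (mul_nonneg (by norm_num) (S.hg.nonneg _)) (posPow_nonneg _ _))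
      (sub_nonneg.2 S.le)
  have h2 := Real.exp_le_one_iff.2 (neg_nonpos.2 h1)
  unfold lower
  linarith

lemma continuous_lower : Continuous S.lower := by
  have := continuous_posPow S.n_pos
  unfold lower
  fun_prop

lemma lower_anti : Antitone S.lower := by
  intro r s hrs
  have h1 : 0 ≤ 4 * S.g S.y₀ := mul_nonneg (by norm_num) (S.hg.nonneg _)
  have h2 := sub_nonneg.2 S.le
  have h3 := posPow_mono S.n_pos hrs
  unfold lower
  gcongr

lemma coeffReg_pos (f : ℝ → ℝ) (r : ℝ) : 0 < S.coeffReg f r :=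
  (S.lower_pos r).trans_le (le_max_right _ _)

variable {S}

lemma Adm.apply_le {p : ℝ → ℝ} (hf : S.Adm f) (hp : Antitone p) (r : ℝ) : p (f r) ≤ p S.y₀ :=
  hp (hf.2 r)

lemma Adm.intervalIntegrable (hf : S.Adm f) (a b : ℝ) :
    IntervalIntegrable (fun s => posPow S.n s * S.g (f s)) volume a b := by
  have hc := continuous_posPow S.n_pos
  refine ((hc.mul continuous_const).intervalIntegrable (μ := volume) a b).mono_fun'
    (g := fun s => posPow S.n s * S.g S.y₀) ?_ ?_
  · exact (hc.measurable.mul (S.hg.cont.measurable.comp hf.1.measurable)).aestronglyMeasurable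
  · refine Filter.Eventually.of_forall fun s => ?_
    dsimp only
    rw [Real.norm_of_nonneg (mul_nonneg (posPow_nonneg _ _) (S.hg.nonneg _))]
    exact mul_le_mul_of_nonneg_left (hf.apply_le S.hg.anti s) (posPow_nonneg _ _)

lemma mass_of_nonpos (f : ℝ → ℝ) {r : ℝ} (hr : r ≤ 0) : S.mass f r = 0 := by
  refine (intervalIntegral.integral_congr (g := fun _ => 0) fun s hs => ?_).trans (by simp)
  rw [uIcc_of_ge hr] at hs
  simp [posPow_of_nonpos S.n_pos hs.2]

lemma mass_nonneg (f : ℝ → ℝ) (r : ℝ) : 0 ≤ S.mass f r := by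
  rcases le_total r 0 with hr | hr
  · exact (mass_of_nonpos f hr).ge
  · exact intervalIntegral.integral_nonneg hr fun s _ =>
      mul_nonneg (posPow_nonneg _ _) (S.hg.nonneg _)

lemma continuous_mass (hf : S.Adm f) : Continuous (S.mass f) :=
  intervalIntegral.continuous_primitive hf.intervalIntegrable 0

lemma mass_div_nonneg (f : ℝ → ℝ) (r : ℝ) : 0 ≤ S.mass f r / r := by
  rcases le_total r 0 with hr | hr
  · simp [mass_of_nonpos f hr]
  · exact div_nonneg (mass_nonneg f r) hr

lemma mass_sub_le (hf : S.Adm f) (hh : S.Adm h) {r K : ℝ} (hr : 0 ≤ r) (hK : 0 ≤ K)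
    (hle : ∀ s ∈ Icc 0 r, S.g (f s) - S.g (h s) ≤ K) :
    S.mass f r - S.mass h r ≤ posPow S.n r * K * r := by
  rw [mass, mass, ← intervalIntegral.integral_sub (hf.intervalIntegrable _ _)
    (hh.intervalIntegrable _ _)]
  calc _ ≤ ∫ _ in (0 : ℝ)..r, posPow S.n r * K := by
        refine intervalIntegral.integral_mono_on hr
          ((hf.intervalIntegrable _ _).sub (hh.intervalIntegrable _ _)) (by simp) fun s hs => ?_
        rw [← mul_sub]
        calc _ ≤ posPow S.n s * K :=
              mul_le_mul_of_nonneg_left (hle s hs) (posPow_nonneg _ _)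
          _ ≤ _ := mul_le_mul_of_nonneg_right (posPow_mono S.n_pos hs.2) hK
    _ = _ := by simp; ring

lemma mass_div_le (hf : S.Adm f) (r : ℝ) : S.mass f r / r ≤ posPow S.n r * S.g S.y₀ := by
  rcases le_or_gt r 0 with hr | hr
  · simp [mass_of_nonpos f hr, posPow_of_nonpos S.n_pos hr]
  · rw [div_le_iff₀ hr, mass]
    calc _ ≤ ∫ _ in (0 : ℝ)..r, posPow S.n r * S.g S.y₀ := by
          refine intervalIntegral.integral_mono_on hr.le (hf.intervalIntegrable _ _) (by simp)
            fun s hs => ?_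
          exact mul_le_mul (posPow_mono S.n_pos hs.2) (hf.apply_le S.hg.anti s) (S.hg.nonneg _)
            (posPow_nonneg _ _)
      _ = _ := by simp; ring

lemma coeff_le_one (f : ℝ → ℝ) (r : ℝ) : S.coeff f r ≤ 1 := by
  have := mass_div_nonneg (S := S) f r
  unfold coeff
  linarith

lemma coeffReg_le_one (f : ℝ → ℝ) (r : ℝ) : S.coeffReg f r ≤ 1 :=
  max_le (coeff_le_one f r) ((S.lower_le_half r).trans (by norm_num))

lemma coeffReg_of_nonpos (f : ℝ → ℝ) {r : ℝ} (hr : r ≤ 0) : S.coeffReg f r = 1 := by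
  refine le_antisymm (coeffReg_le_one f r) (le_max_of_le_left ?_)
  simp [coeff, mass_of_nonpos f hr]

lemma slope_of_nonpos (f : ℝ → ℝ) {r : ℝ} (hr : r ≤ 0) : S.slope f r = 0 := by
  simp [slope, coeffReg_of_nonpos f hr, posPow_of_nonpos S.n_pos hr]

lemma slope_nonneg (f : ℝ → ℝ) (r : ℝ) : 0 ≤ S.slope f r := by
  rcases le_or_gt r 0 with hr | hr
  · rw [slope_of_nonpos f hr]
  · refine div_nonneg (sub_nonneg.2 ?_) (by linarith)
    rw [le_div_iff₀ (S.coeffReg_pos f r)]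
    have := mul_nonneg (posPow_nonneg S.n r) (S.hq.nonneg (f r))
    linarith [coeffReg_le_one (S := S) f r]

/-- A continuous bound of the slope, vanishing at the center. -/
noncomputable def slopeBound (S : RadialSystem) (r : ℝ) : ℝ :=
  posPow (S.n - 1) r * (S.g S.y₀ + S.q S.y₀) / (2 * S.lower r)

lemma continuous_slopeBound : Continuous S.slopeBound :=
  ((continuous_posPow (sub_pos.2 S.one_lt)).mul continuous_const).div
    (continuous_const.mul S.continuous_lower) fun r => (mul_pos two_pos (S.lower_pos r)).ne'

lemma slopeBound_zero : S.slopeBound 0 = 0 := by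
  simp [slopeBound, posPow_of_nonpos (sub_pos.2 S.one_lt) le_rfl]

lemma slope_le (hf : S.Adm f) (r : ℝ) : S.slope f r ≤ S.slopeBound r := by
  have hg := S.hg.nonneg S.y₀
  have hq := S.hq.nonneg S.y₀
  have hl := S.lower_pos r
  rcases le_or_gt r 0 with hr | hr
  · rw [slope_of_nonpos f hr]
    exact div_nonneg (mul_nonneg (posPow_nonneg _ _) (by linarith)) (by linarith)
  · have hx := S.coeffReg_pos f r
    have hlx : S.lower r ≤ S.coeffReg f r := le_max_right _ _
    have h1 : 1 - S.coeffReg f r ≤ posPow S.n r * S.g S.y₀ := by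
      have := mass_div_le hf r
      have h2 : S.coeff f r ≤ S.coeffReg f r := le_max_left _ _
      unfold coeff at h2
      linarith
    have h2 : posPow S.n r * S.q (f r) ≤ posPow S.n r * S.q S.y₀ :=
      mul_le_mul_of_nonneg_left (hf.apply_le S.hq.anti r) (posPow_nonneg _ _)
    have h3 : S.slope f r = (1 - S.coeffReg f r + posPow S.n r * S.q (f r)) /
        (2 * r * S.coeffReg f r) := by
      unfold slope; field_simp; ring
    have h4 : S.slopeBound r = posPow S.n r * (S.g S.y₀ + S.q S.y₀) / (2 * r * S.lower r) := by
      rw [slopeBound, posPow_eq_mul S.one_lt]; field_simp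
    rw [h3, h4]
    have h5 := posPow_nonneg S.n r
    gcongr
    linarith

lemma measurable_slope (hf : S.Adm f) : Measurable (S.slope f) := by
  have h1 := (continuous_posPow S.n_pos).measurable
  have h2 := (continuous_mass hf).measurable
  have h3 := S.hq.cont.measurable.comp hf.1.measurable
  have h4 := S.continuous_lower.measurable
  have h5 : Measurable (S.coeffReg f) :=
    (measurable_const.sub (h2.div measurable_id)).max h4
  exact (((measurable_const.add (h1.mul h3)).div h5).sub measurable_const).div
    (measurable_const.mul measurable_id)

lemma slope_intervalIntegrable (hf : S.Adm f) (a b : ℝ) :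
    IntervalIntegrable (S.slope f) volume a b := by
  refine ((continuous_slopeBound (S := S)).intervalIntegrable a b).mono_fun'
    (measurable_slope hf).aestronglyMeasurable (Filter.Eventually.of_forall fun s => ?_)
  dsimp only
  rw [Real.norm_of_nonneg (slope_nonneg f s)]
  exact slope_le hf s

lemma continuous_op (hf : S.Adm f) : Continuous (S.op f) :=
  continuous_const.add (intervalIntegral.continuous_primitive (slope_intervalIntegrable hf) 0)

lemma op_of_nonpos (f : ℝ → ℝ) {r : ℝ} (hr : r ≤ 0) : S.op f r = S.y₀ := by
  have : ∫ s in (0 : ℝ)..r, S.slope f s = 0 := by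
    refine (intervalIntegral.integral_congr (g := fun _ => 0) fun s hs => ?_).trans (by simp)
    rw [uIcc_of_ge hr] at hs
    exact slope_of_nonpos f hs.2
  rw [op, this, add_zero]

lemma op_adm (hf : S.Adm f) : S.Adm (S.op f) := by
  have hm : Monotone (S.op f) := by
    intro a b hab
    have h1 := intervalIntegral.integral_add_adjacent_intervals
      (slope_intervalIntegrable hf 0 a) (slope_intervalIntegrable hf a b)
    have h2 := intervalIntegral.integral_nonneg (μ := volume) hab fun s _ =>
      slope_nonneg (S := S) f s
    unfold op
    linarith
  refine ⟨hm, fun r => ?_⟩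
  rcases le_total r 0 with hr | hr
  · exact (op_of_nonpos f hr).ge
  · exact (op_of_nonpos f le_rfl).ge.trans (hm hr)

lemma mass_anti (hf : S.Adm f) (hh : S.Adm h) (hfh : ∀ r, f r ≤ h r) (r : ℝ) :
    S.mass h r / r ≤ S.mass f r / r := by
  rcases le_or_gt r 0 with hr | hr
  · simp [mass_of_nonpos _ hr]
  · gcongr
    exact intervalIntegral.integral_mono_on hr.le (hh.intervalIntegrable _ _)
      (hf.intervalIntegrable _ _) fun s _ =>
        mul_le_mul_of_nonneg_left (S.hg.anti (hfh s)) (posPow_nonneg _ _)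

lemma coeffReg_mono (hf : S.Adm f) (hh : S.Adm h) (hfh : ∀ r, f r ≤ h r) (r : ℝ) :
    S.coeffReg f r ≤ S.coeffReg h r :=
  max_le_max_right _ (sub_le_sub_left (mass_anti hf hh hfh r) 1)

lemma slope_anti (hf : S.Adm f) (hh : S.Adm h) (hfh : ∀ r, f r ≤ h r) (r : ℝ) :
    S.slope h r ≤ S.slope f r := by
  rcases le_or_gt r 0 with hr | hr
  · simp [slope_of_nonpos _ hr]
  · have h1 := coeffReg_mono hf hh hfh r
    have h2 := S.hq.anti (hfh r)
    have h3 := S.coeffReg_pos f r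
    have h4 := posPow_nonneg S.n r
    have h5 := S.hq.nonneg (f r)
    unfold slope
    gcongr

lemma op_anti (hf : S.Adm f) (hh : S.Adm h) (hfh : ∀ r, f r ≤ h r) (r : ℝ) :
    S.op h r ≤ S.op f r := by
  rcases le_or_gt r 0 with hr | hr
  · simp [op_of_nonpos _ hr]
  · unfold op
    gcongr
    exact intervalIntegral.integral_mono_on hr.le (slope_intervalIntegrable hh _ _)
      (slope_intervalIntegrable hf _ _) fun s _ => slope_anti hf hh hfh s

/-- The operator only sees the profile values of its argument on `[0, ∞)`. -/
lemma op_congr (hg : ∀ r, 0 ≤ r → S.g (f r) = S.g (h r))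
    (hq : ∀ r, 0 ≤ r → S.q (f r) = S.q (h r)) : S.op f = S.op h := by
  have hm : ∀ r, S.mass f r = S.mass h r := by
    intro r
    rcases le_total r 0 with hr | hr
    · rw [mass_of_nonpos _ hr, mass_of_nonpos _ hr]
    · refine intervalIntegral.integral_congr fun s hs => ?_
      rw [uIcc_of_le hr] at hs
      simp only [hg s hs.1]
  have hs : S.slope f = S.slope h := by
    ext r
    rcases le_total r 0 with hr | hr
    · rw [slope_of_nonpos _ hr, slope_of_nonpos _ hr]
    · rw [slope, slope, coeffReg, coeffReg, coeff, coeff, hm, hq r hr]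
  ext r
  rw [op, op, hs]

/-! #### Regularity for continuous potentials -/

lemma hasDerivAt_mass (hc : Continuous f) (r : ℝ) :
    HasDerivAt (S.mass f) (posPow S.n r * S.g (f r)) r := by
  have : Continuous fun s => posPow S.n s * S.g (f s) :=
    (continuous_posPow S.n_pos).mul (S.hg.cont.comp hc)
  exact intervalIntegral.integral_hasDerivAt_right (this.intervalIntegrable _ _)
    (this.stronglyMeasurableAtFilter _ _) this.continuousAt

/-- The derivative of `coeff`. -/
noncomputable def coeffDeriv (S : RadialSystem) (f : ℝ → ℝ) (r : ℝ) : ℝ :=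
  S.mass f r / r / r - posPow S.n r * S.g (f r) / r

lemma continuousAt_zero_of_abs_le {u v : ℝ → ℝ} (hv : Continuous v) (hv0 : v 0 = 0)
    (hu0 : u 0 = 0) (h : ∀ r, |u r| ≤ v r) : ContinuousAt u 0 := by
  have h1 : Filter.Tendsto v (nhds 0) (nhds 0) := by simpa [hv0] using hv.tendsto 0
  rw [ContinuousAt, hu0]
  exact squeeze_zero_norm h h1

lemma continuous_coeff (hf : S.Adm f) : Continuous (S.coeff f) := by
  refine continuous_const.sub (continuous_iff_continuousAt.2 fun r => ?_)
  rcases eq_or_ne r 0 with rfl | hr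
  · refine continuousAt_zero_of_abs_le
      (v := fun r => posPow S.n r * S.g S.y₀) ((continuous_posPow S.n_pos).mul continuous_const) ?_
      (by simp) fun r => ?_
    · simp [posPow_of_nonpos S.n_pos le_rfl]
    · rw [abs_of_nonneg (mass_div_nonneg f r)]
      exact mass_div_le hf r
  · exact (continuous_mass hf).continuousAt.div continuousAt_id hr

lemma continuous_coeffDeriv (hf : S.Adm f) (hc : Continuous f) : Continuous (S.coeffDeriv f) := by
  have hp := continuous_posPow S.n_pos
  refine continuous_iff_continuousAt.2 fun r => ?_
  rcases eq_or_ne r 0 with rfl | hr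
  · have hp' := continuous_posPow (sub_pos.2 S.one_lt)
    refine continuousAt_zero_of_abs_le (v := fun r => posPow (S.n - 1) r * S.g S.y₀)
      (hp'.mul continuous_const) ?_ (by simp [coeffDeriv]) fun r => ?_
    · simp [posPow_of_nonpos (sub_pos.2 S.one_lt) le_rfl]
    · rcases le_or_gt r 0 with hr | hr
      · simp [coeffDeriv, mass_of_nonpos f hr, posPow_of_nonpos S.n_pos hr,
          posPow_of_nonpos (sub_pos.2 S.one_lt) hr]
      · have h1 := mass_div_le hf r
        have h2 := mass_div_nonneg (S := S) f r
        have h3 : posPow S.n r * S.g (f r) ≤ posPow S.n r * S.g S.y₀ :=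
          mul_le_mul_of_nonneg_left (hf.apply_le S.hg.anti r) (posPow_nonneg _ _)
        have h4 := mul_nonneg (posPow_nonneg S.n r) (S.hg.nonneg (f r))
        have h5 : posPow (S.n - 1) r * S.g S.y₀ = posPow S.n r * S.g S.y₀ / r := by
          rw [posPow_eq_mul S.one_lt]; field_simp
        rw [coeffDeriv, ← sub_div, h5, abs_div, abs_of_pos hr]
        gcongr
        rw [abs_le]
        constructor <;> linarith
  · have hm : ContinuousAt (S.mass f) r := (continuous_mass hf).continuousAt
    have hg : ContinuousAt (fun r => posPow S.n r * S.g (f r)) r :=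
      (hp.mul (S.hg.cont.comp hc)).continuousAt
    exact ((hm.div continuousAt_id hr).div continuousAt_id hr).sub (hg.div continuousAt_id hr)

lemma hasDerivAt_coeff (hf : S.Adm f) (hc : Continuous f) (r : ℝ) :
    HasDerivAt (S.coeff f) (S.coeffDeriv f r) r := by
  refine hasDerivAt_of_hasDerivAt_of_ne' (x := 0) (fun r hr => ?_)
    (continuous_coeff hf).continuousAt (continuous_coeffDeriv hf hc).continuousAt r
  have := ((hasDerivAt_mass (S := S) hc r).div (hasDerivAt_id r) hr).const_sub 1
  refine HasDerivAt.congr_deriv (f := S.coeff f) this ?_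
  simp only [coeffDeriv, id]
  field_simp
  ring

lemma continuous_slope (hf : S.Adm f) (hc : Continuous f) : Continuous (S.slope f) := by
  have hp := continuous_posPow S.n_pos
  refine continuous_iff_continuousAt.2 fun r => ?_
  rcases eq_or_ne r 0 with rfl | hr
  · refine continuousAt_zero_of_abs_le (continuous_slopeBound (S := S)) slopeBound_zero
      (slope_of_nonpos f le_rfl) fun r => ?_
    rw [abs_of_nonneg (slope_nonneg f r)]
    exact slope_le hf r
  · have h1 : Continuous (S.coeffReg f) := (continuous_coeff hf).max S.continuous_lower
    have h2 : Continuous fun r => (1 + posPow S.n r * S.q (f r)) / S.coeffReg f r - 1 :=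
      ((continuous_const.add (hp.mul (S.hq.cont.comp hc))).div h1
        fun r => (S.coeffReg_pos f r).ne').sub continuous_const
    exact h2.continuousAt.div (continuousAt_const.mul continuousAt_id) (by simpa using hr)

lemma hasDerivAt_op (hf : S.Adm f) (hc : Continuous f) (r : ℝ) :
    HasDerivAt (S.op f) (S.slope f r) r := by
  have := continuous_slope hf hc
  exact (intervalIntegral.integral_hasDerivAt_right (this.intervalIntegrable _ _)
      (this.stronglyMeasurableAtFilter _ _) this.continuousAt).const_add S.y₀

/-! #### The a priori bound: no horizon forms -/

lemma neg_le_coeffDeriv (f : ℝ → ℝ) {r : ℝ} (hr : 0 < r) :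
    -(posPow S.n r * S.g (f r) / r) ≤ S.coeffDeriv f r := by
  have := div_nonneg (mass_div_nonneg (S := S) f r) hr.le
  unfold coeffDeriv
  linarith

lemma coeff_zero (f : ℝ → ℝ) : S.coeff f 0 = 1 := by simp [coeff]

/-- The lower bound of `coeff` in terms of the growth of the potential. -/
lemma exp_le_coeff {x : ℝ → ℝ} (hf : S.Adm f) (hc : Continuous f) (hx0 : ∀ r, 0 < r → 0 < x r)
    (hx : ∀ r, 0 < r → x r ≤ S.coeffReg f r)
    (hd : ∀ r, 0 < r → HasDerivAt f (((1 + posPow S.n r * S.q (f r)) / x r - 1) / (2 * r)) r)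
    {R : ℝ} (hR : 0 ≤ R) :
    1 / 2 * Real.exp (-(4 * S.g S.y₀ * posPow S.n R * (f R - S.y₀))) ≤ S.coeff f R := by
  have hp := continuous_posPow S.n_pos
  have hM := S.hg.nonneg S.y₀
  set e : ℝ → ℝ := fun r => 1 / 2 * Real.exp (-(4 * S.g S.y₀ * posPow S.n r * (f r - S.y₀))) with he
  set f' : ℝ → ℝ := fun r => ((1 + posPow S.n r * S.q (f r)) / x r - 1) / (2 * r) with hf'
  have hec : Continuous e := by fun_prop
  have hle : ∀ r, e r ≤ 1 / 2 := fun r => by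
    have h1 : 0 ≤ 4 * S.g S.y₀ * posPow S.n r * (f r - S.y₀) :=
      mul_nonneg (mul_nonneg (mul_nonneg (by norm_num) hM) (posPow_nonneg _ _))
        (sub_nonneg.2 (hf.2 r))
    have h2 := Real.exp_le_one_iff.2 (neg_nonpos.2 h1)
    simp only [he]
    linarith
  have hed : ∀ r, 0 < r → HasDerivAt e (-(e r * (4 * S.g S.y₀ *
      (S.n * r ^ (S.n - 1) * (f r - S.y₀) + posPow S.n r * f' r)))) r := by
    intro r hr
    have := ((((hasDerivAt_posPow (n := S.n) hr).const_mul (4 * S.g S.y₀)).mul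
      ((hd r hr).sub_const S.y₀)).neg.exp).const_mul (1 / 2)
    refine HasDerivAt.congr_deriv (f := e) this ?_
    simp only [he, hf', Pi.mul_apply, Pi.neg_apply]
    ring
  refine sub_nonneg.1 (?_ : 0 ≤ S.coeff f R - e R)
  refine nonneg_of_deriv_nonneg_of_neg (ψ := fun r => S.coeff f r - e r) hR
    ((continuous_coeff hf).sub hec).continuousOn ?_ (fun r hr hneg =>
      ⟨(hasDerivAt_coeff hf hc r).sub (hed r hr), ?_⟩)
  · have := hle 0
    simp only [coeff_zero]
    linarith
  · have hxr := hx0 r hr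
    have hx1 : x r ≤ 1 := (hx r hr).trans (coeffReg_le_one f r)
    have hP := mul_nonneg (posPow_nonneg S.n r) (S.hq.nonneg (f r))
    have hf'0 : (1 / x r - 1) / (2 * r) ≤ f' r := by
      simp only [hf']
      gcongr
      linarith
    have h1x : 1 ≤ 1 / x r := by rwa [le_div_iff₀ hxr, one_mul]
    have hf'1 : 0 ≤ f' r := le_trans (div_nonneg (by linarith) (by linarith)) hf'0
    have he0 : 0 < e r := by simp only [he]; positivity
    have hder := neg_le_coeffDeriv (S := S) f hr
    have hn := S.n_pos
    have hfy := sub_nonneg.2 (hf.2 r)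
    have hpow := posPow_nonneg S.n r
    have hA : 0 ≤ e r * (4 * S.g S.y₀ * (S.n * r ^ (S.n - 1) * (f r - S.y₀))) := by positivity
    have hkey : posPow S.n r * S.g (f r) / r ≤ e r * (4 * S.g S.y₀ * (posPow S.n r * f' r)) := by
      rcases le_or_gt S.y₁ (f r) with hy | hy
      · rw [S.hg.zero _ hy]
        simp only [mul_zero, zero_div]
        positivity
      · have hlow : S.lower r ≤ e r := by
          have := hy.le
          simp only [he, lower]
          gcongr
        have hxe : x r ≤ e r := (hx r hr).trans (max_le (by linarith) hlow)
        have hx2 : x r ≤ 1 / 2 := hxe.trans (hle r)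
        have h2 : 1 ≤ 4 * r * e r * f' r := by
          have h3 : 1 / (4 * r * x r) ≤ (1 / x r - 1) / (2 * r) := by
            rw [div_le_div_iff₀ (by positivity) (by positivity)]
            field_simp
            nlinarith
          have h4 : 1 / (4 * r * x r) ≤ f' r := h3.trans hf'0
          rw [div_le_iff₀ (by positivity)] at h4
          calc (1 : ℝ) ≤ f' r * (4 * r * x r) := h4
            _ ≤ f' r * (4 * r * e r) := by gcongr
            _ = _ := by ring
        calc posPow S.n r * S.g (f r) / r ≤ posPow S.n r * S.g S.y₀ / r := by
              gcongr
              exact hf.apply_le S.hg.anti r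
          _ ≤ posPow S.n r * S.g S.y₀ / r * (4 * r * e r * f' r) :=
              le_mul_of_one_le_right (by positivity) h2
          _ = _ := by field_simp
    simp only [mul_add] at hA hkey ⊢
    linarith

lemma lower_le_coeff {x : ℝ → ℝ} (hf : S.Adm f) (hc : Continuous f)
    (hx0 : ∀ r, 0 < r → 0 < x r) (hx : ∀ r, 0 < r → x r ≤ S.coeffReg f r)
    (hd : ∀ r, 0 < r → HasDerivAt f (((1 + posPow S.n r * S.q (f r)) / x r - 1) / (2 * r)) r)
    (R : ℝ) : S.lower R ≤ S.coeff f R := by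
  rcases le_total R 0 with hR | hR
  · have := S.lower_le_half R
    simp only [coeff, mass_of_nonpos f hR, zero_div]
    linarith
  have hM := S.hg.nonneg S.y₀
  have hld : ∀ r, 0 < r → HasDerivAt S.lower (-(S.lower r * (4 * S.g S.y₀ *
      (S.n * r ^ (S.n - 1)) * (S.y₁ - S.y₀)))) r := by
    intro r hr
    have := (((((hasDerivAt_posPow (n := S.n) hr).const_mul (4 * S.g S.y₀)).mul_const
      (S.y₁ - S.y₀))).neg.exp).const_mul (1 / 2)
    refine HasDerivAt.congr_deriv (f := S.lower) this ?_
    simp only [lower, Pi.neg_apply]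
    ring
  suffices 0 ≤ S.coeff f R - S.lower R by linarith
  refine nonneg_of_deriv_nonneg_of_neg (ψ := fun r => S.coeff f r - S.lower r) hR
    ((continuous_coeff hf).sub S.continuous_lower).continuousOn ?_ (fun r hr hneg =>
      ⟨(hasDerivAt_coeff hf hc r).sub (hld r hr), ?_⟩)
  · have := S.lower_le_half 0
    simp only [coeff_zero]
    linarith
  · have hy : S.y₁ ≤ f r := by
      by_contra! hy
      have h1 := exp_le_coeff hf hc hx0 hx hd hr.le
      have h2 : S.lower r ≤
          1 / 2 * Real.exp (-(4 * S.g S.y₀ * posPow S.n r * (f r - S.y₀))) := by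
        have := posPow_nonneg S.n r
        have := hy.le
        unfold lower
        gcongr
      linarith
    have hder := neg_le_coeffDeriv (S := S) f hr
    rw [S.hg.zero _ hy] at hder
    simp only [mul_zero, zero_div, neg_zero] at hder
    have h1 := S.lower_pos r
    have h2 := sub_nonneg.2 S.le
    have h3 := S.n_pos
    have : 0 ≤ S.lower r * (4 * S.g S.y₀ * (S.n * r ^ (S.n - 1)) * (S.y₁ - S.y₀)) := by positivity
    linarith

/-! #### Two-cycles of the operator collapse -/

/-- The Lipschitz-type estimate for the slope of two ordered potentials. -/
lemma slope_sub_le (hf : S.Adm f) (hh : S.Adm h) (hfh : ∀ r, f r ≤ h r) {r s D Lg Lq : ℝ}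
    (hs : 0 < s) (hsr : s ≤ r) (hD : 0 ≤ D) (hLg : 0 ≤ Lg) (hLq : 0 ≤ Lq)
    (hg : ∀ t ∈ Icc 0 s, S.g (f t) - S.g (h t) ≤ Lg * D) (hq : S.q (f s) - S.q (h s) ≤ Lq * D) :
    S.slope f s - S.slope h s ≤ posPow (S.n - 1) r * (Lq / S.lower r +
      (1 + posPow S.n r * S.q S.y₀) * Lg / (S.lower r * S.lower r)) / 2 * D := by
  have hlow := S.lower_pos r
  have hxf : S.lower r ≤ S.coeffReg f s := (S.lower_anti hsr).trans (le_max_right _ _)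
  have hxh : S.lower r ≤ S.coeffReg h s := (S.lower_anti hsr).trans (le_max_right _ _)
  have hxf0 := S.coeffReg_pos f s
  have hxh0 := S.coeffReg_pos h s
  have hp := posPow_nonneg S.n s
  have hp1 := posPow_nonneg (S.n - 1) s
  have hqh := S.hq.nonneg (h s)
  have hq0 := S.hq.nonneg S.y₀
  have hpr := posPow_nonneg S.n r
  have hpr1 := posPow_nonneg (S.n - 1) r
  have hps := posPow_mono S.n_pos hsr
  have hps1 := posPow_mono (sub_pos.2 S.one_lt) hsr
  have hdx : S.coeffReg h s - S.coeffReg f s ≤ posPow S.n s * (Lg * D) := by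
    have h1 := mass_sub_le hf hh hs.le (mul_nonneg hLg hD) hg
    have h2 : S.mass f s / s - S.mass h s / s ≤ posPow S.n s * (Lg * D) := by
      rw [← sub_div, div_le_iff₀ hs]
      exact h1
    have h3 : S.coeff h s ≤ S.coeff f s + posPow S.n s * (Lg * D) := by
      unfold coeff
      linarith
    have h4 : S.coeffReg h s ≤ S.coeffReg f s + posPow S.n s * (Lg * D) := by
      refine max_le (h3.trans ?_) ?_
      · gcongr
        exact le_max_left _ _
      · exact (le_max_right _ _).trans (le_add_of_nonneg_right (by positivity))
    linarith
  have hdP : posPow S.n s * S.q (f s) - posPow S.n s * S.q (h s) ≤ posPow S.n s * (Lq * D) := by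
    rw [← mul_sub]
    gcongr
  have heq : S.slope f s - S.slope h s =
      ((posPow S.n s * S.q (f s) - posPow S.n s * S.q (h s)) / S.coeffReg f s +
        (1 + posPow S.n s * S.q (h s)) * (S.coeffReg h s - S.coeffReg f s) /
          (S.coeffReg f s * S.coeffReg h s)) / (2 * s) := by
    unfold slope
    field_simp
    ring
  have hqy := hh.apply_le S.hq.anti s
  have hx0 := sub_nonneg.2 (coeffReg_mono hf hh hfh s)
  rw [heq]
  calc _ ≤ (posPow S.n s * (Lq * D) / S.lower r +
        (1 + posPow S.n r * S.q S.y₀) * (posPow S.n s * (Lg * D)) /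
          (S.lower r * S.lower r)) / (2 * s) := by
        gcongr
    _ = posPow (S.n - 1) s * (Lq / S.lower r +
        (1 + posPow S.n r * S.q S.y₀) * Lg / (S.lower r * S.lower r)) / 2 * D := by
        rw [posPow_eq_mul (r := s) S.one_lt]
        field_simp
    _ ≤ _ := by
        gcongr

lemma eq_of_two_cycle (hf : S.Adm f) (hh : S.Adm h) (hfh : ∀ r, f r ≤ h r)
    (h1 : S.op f = h) (h2 : S.op h = f) : f = h := by
  have hfc : Continuous f := h2 ▸ continuous_op hh
  have hhc : Continuous h := h1 ▸ continuous_op hf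
  have hf0 : f 0 = S.y₀ := h2 ▸ op_of_nonpos h le_rfl
  have hh0 : h 0 = S.y₀ := h1 ▸ op_of_nonpos f le_rfl
  have hDd : ∀ r, HasDerivAt (fun s => h s - f s) (S.slope f r - S.slope h r) r := by
    intro r
    have e1 := hasDerivAt_op hf hfc r
    have e2 := hasDerivAt_op hh hhc r
    rw [h1] at e1
    rw [h2] at e2
    exact e1.sub e2
  have hDm : Monotone fun s => h s - f s :=
    monotone_of_hasDerivAt_nonneg hDd fun r => sub_nonneg.2 (slope_anti hf hh hfh r)
  have hinner : ∀ r, 0 ≤ r → h r < S.y₁ → f r = h r := by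
    intro r hr hlt
    obtain ⟨Lg, hLg, hLg'⟩ := S.hg.lip _ hlt
    obtain ⟨Lq, hLq, hLq'⟩ := S.hq.lip _ hlt
    set C := posPow (S.n - 1) r * (Lq / S.lower r +
      (1 + posPow S.n r * S.q S.y₀) * Lg / (S.lower r * S.lower r)) / 2 with hC
    have hest : ∀ s, 0 < s → s ≤ r → S.slope f s - S.slope h s ≤ C * (h s - f s) := by
      intro s hs hsr
      refine slope_sub_le hf hh hfh hs hsr (sub_nonneg.2 (hfh s)) hLg hLq (fun t ht => ?_) ?_
      · exact (hLg' _ _ (hf.2 t) (hfh t) (hh.1 (ht.2.trans hsr))).trans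
          (mul_le_mul_of_nonneg_left (hDm ht.2) hLg)
      · exact hLq' _ _ (hf.2 s) (hfh s) (hh.1 hsr)
    have hanti : AntitoneOn (fun s => (h s - f s) * Real.exp (-(C * s))) (Icc 0 r) := by
      refine antitoneOn_of_hasDerivWithinAt_nonpos (convex_Icc 0 r) (by fun_prop)
        (f' := fun s => (S.slope f s - S.slope h s - C * (h s - f s)) * Real.exp (-(C * s)))
        (fun s _ => ?_) (fun s hs => ?_)
      · have := (hDd s).mul (((hasDerivAt_id s).const_mul C).neg.exp)
        refine (this.congr_deriv ?_).hasDerivWithinAt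
        simp only [Pi.neg_apply, id]
        ring
      · rw [interior_Icc] at hs
        exact mul_nonpos_of_nonpos_of_nonneg (sub_nonpos.2 (hest s hs.1 hs.2.le))
          (Real.exp_pos _).le
    have := hanti ⟨le_rfl, hr⟩ ⟨hr, le_rfl⟩ hr
    simp only [hf0, hh0, sub_self, zero_mul] at this
    have := nonpos_of_mul_nonpos_left this (Real.exp_pos _)
    exact le_antisymm (hfh r) (by linarith)
  have houter : ∀ r, 0 ≤ r → S.y₁ ≤ h r → S.y₁ ≤ f r := by
    intro r hr hle
    refine le_of_forall_lt fun c hc => ?_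
    obtain ⟨c', hcc', hc'⟩ := exists_between hc
    rcases lt_or_ge c' S.y₀ with hcy | hcy
    · exact hcc'.trans (hcy.trans_le (hf.2 r))
    · obtain ⟨t, ht, hte⟩ := intermediate_value_Icc hr hhc.continuousOn
        ⟨hh0.le.trans hcy, hc'.le.trans hle⟩
      have := hinner t ht.1 (hte ▸ hc')
      calc c < c' := hcc'
        _ = f t := by rw [this, hte]
        _ ≤ f r := hf.1 ht.2
  have hcongr : ∀ p : ℝ → ℝ, (∀ y, S.y₁ ≤ y → p y = 0) → ∀ r, 0 ≤ r → p (f r) = p (h r) := by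
    intro p hp r hr
    rcases lt_or_ge (h r) S.y₁ with hlt | hge
    · rw [hinner r hr hlt]
    · rw [hp _ hge, hp _ (houter r hr hge)]
  exact h2.symm.trans ((op_congr (hcongr S.g S.hg.zero) (hcongr S.q S.hq.zero)).symm.trans h1)

/-! #### The unique fixed point -/

lemma profile_projIcc {p : ℝ → ℝ} (hp : ∀ y, S.y₁ ≤ y → p y = 0) {y : ℝ} (hy : S.y₀ ≤ y) :
    p (projIcc S.y₀ S.y₁ S.le y) = p y := by
  rcases le_total y S.y₁ with h | h
  · rw [projIcc_of_mem S.le ⟨hy, h⟩]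
  · rw [projIcc_of_right_le S.le h, hp _ h, hp _ le_rfl]

lemma op_projIcc (hf : S.Adm f) : S.op (fun r => projIcc S.y₀ S.y₁ S.le (f r)) = S.op f :=
  op_congr (fun r _ => profile_projIcc S.hg.zero (hf.2 r))
    (fun r _ => profile_projIcc S.hq.zero (hf.2 r))

lemma adm_coe (u : ℝ →o Icc S.y₀ S.y₁) : S.Adm fun r => (u r : ℝ) :=
  ⟨fun _ _ h => u.monotone h, fun r => (u r).2.1⟩

/-- The operator, truncated to a self-map of the lattice of monotone functions into
`[y₀, y₁]`. -/
noncomputable def opIcc (u : ℝ →o Icc S.y₀ S.y₁) : ℝ →o Icc S.y₀ S.y₁ where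
  toFun r := projIcc S.y₀ S.y₁ S.le (S.op (fun r => (u r : ℝ)) r)
  monotone' _ _ h := monotone_projIcc S.le ((op_adm (adm_coe u)).1 h)

lemma opIcc_anti : Antitone (opIcc (S := S)) := fun u v huv r =>
  monotone_projIcc S.le (op_anti (adm_coe u) (adm_coe v) (fun s => huv s) r)

lemma op_coe_opIcc (u : ℝ →o Icc S.y₀ S.y₁) :
    S.op (fun r => (opIcc u r : ℝ)) = S.op (S.op fun r => (u r : ℝ)) :=
  op_projIcc (op_adm (adm_coe u))

variable (S) in
theorem exists_unique_fixed_point :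
    ∃ f, S.Adm f ∧ S.op f = f ∧ ∀ h, S.Adm h → S.op h = h → h = f := by
  have : Fact (S.y₀ ≤ S.y₁) := ⟨S.le⟩
  obtain ⟨a, b, hab, hTa, hTb, hfix⟩ :=
    exists_two_cycle_of_antitone (α := ℝ →o Icc S.y₀ S.y₁) (T := opIcc) opIcc_anti
  have hA := op_adm (adm_coe b)
  have hB := op_adm (adm_coe a)
  have e1 : S.op (S.op fun r => (b r : ℝ)) = S.op fun r => (a r : ℝ) := by
    rw [← op_coe_opIcc, hTb]
  have e2 : S.op (S.op fun r => (a r : ℝ)) = S.op fun r => (b r : ℝ) := by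
    rw [← op_coe_opIcc, hTa]
  have hAB := eq_of_two_cycle hA hB (op_anti (adm_coe a) (adm_coe b) fun r => hab r) e1 e2
  refine ⟨_, hA, e1.trans hAB.symm, fun h hh hhop => ?_⟩
  let c : ℝ →o Icc S.y₀ S.y₁ := ⟨fun r => projIcc S.y₀ S.y₁ S.le (h r),
    fun _ _ hrs => monotone_projIcc S.le (hh.1 hrs)⟩
  have hc : S.op (fun r => (c r : ℝ)) = h := (op_projIcc hh).trans hhop
  have hcfix : opIcc c = c := by
    ext r
    change ((projIcc S.y₀ S.y₁ S.le (S.op (fun r => (c r : ℝ)) r) : Icc S.y₀ S.y₁) : ℝ) = _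
    rw [hc]
    rfl
  obtain ⟨hac, hcb⟩ := hfix c hcfix
  funext r
  refine le_antisymm ?_ ?_
  · rw [hAB, ← hc]
    exact op_anti (adm_coe a) (adm_coe c) (fun s => hac s) r
  · rw [← hc]
    exact op_anti (adm_coe c) (adm_coe b) (fun s => hcb s) r

end RadialSystem

/-! ### The functions `h_m` are profiles -/

lemma rpow_sub_rpow_le_mul {p A B K : ℝ} (hp : 0 < p) (hB : 0 ≤ B) (hBA : B ≤ A)
    (hK : ∀ x ∈ Ioo B A, p * x ^ (p - 1) ≤ K) : A ^ p - B ^ p ≤ K * (A - B) := by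
  have hd : ∀ x ∈ Ioo B A, HasDerivAt (fun x : ℝ => x ^ p) (p * x ^ (p - 1)) x := fun x hx =>
    Real.hasDerivAt_rpow_const (Or.inl (hB.trans_lt hx.1).ne')
  refine (convex_Icc B A).image_sub_le_mul_sub_of_deriv_le (f := fun x : ℝ => x ^ p)
    (continuous_id.rpow_const fun _ => Or.inr hp.le).continuousOn ?_ ?_ B ⟨le_rfl, hBA⟩ A
    ⟨hBA, le_rfl⟩ hBA
  · rw [interior_Icc]
    exact fun x hx => (hd x hx).differentiableAt.differentiableWithinAt
  · rw [interior_Icc]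
    intro x hx
    rw [(hd x hx).deriv]
    exact hK x hx

lemma continuous_sq_sub_rpow {m : ℝ} (hm : 0 < m) (u : ℝ) :
    Continuous fun E : ℝ => (E ^ 2 - u ^ 2) ^ m :=
  ((continuous_pow 2).sub continuous_const).rpow_const fun _ => Or.inr hm.le

lemma sq_sub_rpow_mono {m u v E : ℝ} (hm : 0 < m) (hu : 0 < u) (huv : u ≤ v) (hE : v ≤ E) :
    0 ≤ (E ^ 2 - u ^ 2) ^ m - (E ^ 2 - v ^ 2) ^ m := by
  have h1 : u ^ 2 ≤ v ^ 2 := pow_le_pow_left₀ hu.le huv 2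
  have h2 : v ^ 2 ≤ E ^ 2 := pow_le_pow_left₀ (hu.le.trans huv) hE 2
  exact sub_nonneg.2 (Real.rpow_le_rpow (by linarith) (by linarith) hm.le)

lemma integral_mul_sq_sub_rpow {m : ℝ} (hm : 0 < m) (u a b : ℝ) :
    ∫ E in a..b, E * (E ^ 2 - u ^ 2) ^ m =
      ((b ^ 2 - u ^ 2) ^ (m + 1) - (a ^ 2 - u ^ 2) ^ (m + 1)) / (2 * (m + 1)) := by
  have hd : ∀ E ∈ uIcc a b, HasDerivAt (fun E : ℝ => (E ^ 2 - u ^ 2) ^ (m + 1) / (2 * (m + 1)))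
      (E * (E ^ 2 - u ^ 2) ^ m) E := by
    intro E _
    have h1 : HasDerivAt (fun E : ℝ => E ^ 2 - u ^ 2) (2 * E) E := by
      simpa using (hasDerivAt_pow 2 E).sub_const (u ^ 2)
    refine ((h1.rpow_const (p := m + 1) (Or.inr (by linarith))).div_const
      (2 * (m + 1))).congr_deriv ?_
    rw [add_sub_cancel_right]
    field_simp
  rw [intervalIntegral.integral_eq_sub_of_hasDerivAt hd
    ((continuous_id.mul (continuous_sq_sub_rpow hm u)).intervalIntegrable _ _), sub_div]

/-- The increment estimate behind the Lipschitz continuity of `h_m`, for a bounded density. -/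
lemma integral_sq_sub_rpow_sub_le {m α u v γ : ℝ} (hm : 0 < m) (hα : 0 < α) (hαu : α ≤ u)
    (huv : u ≤ v) (hvγ : v ≤ γ) :
    ∫ E in v..γ, ((E ^ 2 - u ^ 2) ^ m - (E ^ 2 - v ^ 2) ^ m) ≤
      (γ ^ 2) ^ m / (2 * α) * (v ^ 2 - u ^ 2) := by
  have hu : 0 < u := hα.trans_le hαu
  have hc := (continuous_sq_sub_rpow hm u).sub (continuous_sq_sub_rpow hm v)
  have huv2 : u ^ 2 ≤ v ^ 2 := pow_le_pow_left₀ hu.le huv 2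
  have hvγ2 : v ^ 2 ≤ γ ^ 2 := pow_le_pow_left₀ (hu.le.trans huv) hvγ 2
  have hK : (γ ^ 2 - u ^ 2) ^ (m + 1) - (γ ^ 2 - v ^ 2) ^ (m + 1) ≤
      ((m + 1) * (γ ^ 2) ^ m) * (γ ^ 2 - u ^ 2 - (γ ^ 2 - v ^ 2)) := by
    refine rpow_sub_rpow_le_mul (by linarith) (by linarith) (by linarith) fun x hx => ?_
    rw [add_sub_cancel_right]
    have hx0 : 0 ≤ x := by linarith [hx.1]
    have hx1 : x ≤ γ ^ 2 := by linarith [hx.2, sq_nonneg u]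
    gcongr
  calc ∫ E in v..γ, ((E ^ 2 - u ^ 2) ^ m - (E ^ 2 - v ^ 2) ^ m)
      ≤ ∫ E in v..γ, 1 / α * (E * (E ^ 2 - u ^ 2) ^ m - E * (E ^ 2 - v ^ 2) ^ m) := by
        refine intervalIntegral.integral_mono_on hvγ (hc.intervalIntegrable _ _)
          (Continuous.intervalIntegrable ?_ _ _) fun E hE => ?_
        · exact continuous_const.mul ((continuous_id.mul (continuous_sq_sub_rpow hm u)).sub
            (continuous_id.mul (continuous_sq_sub_rpow hm v)))
        · have hvE : v ^ 2 ≤ E ^ 2 := pow_le_pow_left₀ (hu.le.trans huv) hE.1 2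
          have h0 : 0 ≤ (E ^ 2 - u ^ 2) ^ m - (E ^ 2 - v ^ 2) ^ m :=
            sub_nonneg.2 (Real.rpow_le_rpow (by linarith) (by linarith) hm.le)
          have h1 : 1 ≤ 1 / α * E := by
            rw [one_div, ← div_eq_inv_mul, le_div_iff₀ hα, one_mul]
            exact hαu.trans (huv.trans hE.1)
          calc _ ≤ 1 / α * E * ((E ^ 2 - u ^ 2) ^ m - (E ^ 2 - v ^ 2) ^ m) :=
                le_mul_of_one_le_left h0 h1
            _ = _ := by ring
    _ = 1 / α * (((γ ^ 2 - u ^ 2) ^ (m + 1) - (v ^ 2 - u ^ 2) ^ (m + 1)) / (2 * (m + 1)) -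
          (γ ^ 2 - v ^ 2) ^ (m + 1) / (2 * (m + 1))) := by
        have hi : ∀ w : ℝ,
            IntervalIntegrable (fun E : ℝ => E * (E ^ 2 - w ^ 2) ^ m) volume v γ := fun w =>
          (continuous_id.mul (continuous_sq_sub_rpow hm w)).intervalIntegrable _ _
        rw [intervalIntegral.integral_const_mul, intervalIntegral.integral_sub (hi u) (hi v)]
        have e1 := integral_mul_sq_sub_rpow hm u v γ
        have e2 := integral_mul_sq_sub_rpow hm v v γ
        rw [sub_self (v ^ 2), Real.zero_rpow (by linarith), sub_zero] at e2
        rw [e1, e2]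
    _ ≤ 1 / α * (((m + 1) * (γ ^ 2) ^ m) * (v ^ 2 - u ^ 2) / (2 * (m + 1))) := by
        rw [← sub_div]
        have : 0 ≤ (v ^ 2 - u ^ 2) ^ (m + 1) := Real.rpow_nonneg (by linarith) _
        gcongr
        linarith
    _ = _ := by
        field_simp

/-- The properties of the microscopic profile `φ` that the functions `h_m` depend on. -/
structure IsEnergyDensity (E₀ : ℝ) (φ : ℝ → ℝ) : Prop where
  pos : 0 < E₀
  nonneg : ∀ E, 0 < E → 0 ≤ φ E
  vanish : ∀ E, E₀ ≤ E → φ E = 0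
  integrable : ∀ u, 0 < u → u ≤ E₀ → IntervalIntegrable φ volume u E₀
  bounded : ∀ a b, 0 < a → b < E₀ → ∃ C, 0 ≤ C ∧ ∀ E ∈ Icc a b, φ E ≤ C

lemma isEnergyDensity_of_bound {E₀ k : ℝ} (hE₀ : 0 < E₀) (hk : -1 < k) {φ : ℝ → ℝ}
    (hmeas : Measurable φ) (hnonneg : ∀ E, 0 < E → 0 ≤ φ E) (hvanish : ∀ E, E₀ ≤ E → φ E = 0)
    (hbound : ∀ K : Set ℝ, IsCompact K → K ⊆ Ioi 0 →
      ∃ C : ℝ, 0 ≤ C ∧ ∀ E ∈ K, φ E ≤ C * (max (E₀ - E) 0) ^ k) :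
    IsEnergyDensity E₀ φ where
  pos := hE₀
  nonneg := hnonneg
  vanish := hvanish
  integrable u hu huE := by
    obtain ⟨C, -, hC⟩ := hbound (Icc u E₀) isCompact_Icc fun E hE => hu.trans_le hE.1
    have h1 : IntervalIntegrable (fun E => C * (E₀ - E) ^ k) volume u E₀ := by
      have := ((intervalIntegral.intervalIntegrable_rpow' (a := E₀ - u) (b := 0) hk).comp_sub_left
        E₀).const_mul C
      simpa using this
    refine h1.mono_fun' hmeas.aestronglyMeasurable ?_
    rw [uIoc_of_le huE]
    refine (ae_restrict_iff' measurableSet_Ioc).2 (Filter.Eventually.of_forall fun E hE => ?_)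
    dsimp only
    rw [Real.norm_of_nonneg (hnonneg E (hu.trans hE.1))]
    have := hC E ⟨hE.1.le, hE.2⟩
    rwa [max_eq_left (sub_nonneg.2 hE.2)] at this
  bounded a b ha hb := by
    obtain ⟨C, hC0, hC⟩ := hbound (Icc a b) isCompact_Icc fun E hE => ha.trans_le hE.1
    have hcont : ContinuousOn (fun E => (E₀ - E) ^ k) (Icc a b) :=
      (continuousOn_const.sub continuousOn_id).rpow_const fun E hE =>
        Or.inl (sub_pos.2 (hE.2.trans_lt hb)).ne'
    obtain ⟨B, hB⟩ := (isCompact_Icc.image_of_continuousOn hcont).bddAbove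
    refine ⟨C * max B 0, by positivity, fun E hE => (hC E hE).trans ?_⟩
    rw [max_eq_left (sub_nonneg.2 (hE.2.trans hb.le))]
    gcongr
    exact (hB (mem_image_of_mem _ hE)).trans (le_max_left _ _)

namespace IsEnergyDensity

variable {E₀ m : ℝ} {φ : ℝ → ℝ}

lemma intervalIntegrable (hφ : IsEnergyDensity E₀ φ) {a b : ℝ} (ha : 0 < a) (hab : a ≤ b)
    (hb : b ≤ E₀) :
    IntervalIntegrable φ volume a b :=
  (hφ.integrable a ha (hab.trans hb)).mono_set (by
    rw [uIcc_of_le hab, uIcc_of_le (hab.trans hb)]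
    exact Icc_subset_Icc_right hb)

lemma intervalIntegrable_mul (hφ : IsEnergyDensity E₀ φ) (hm : 0 < m) (u : ℝ) {a b : ℝ}
    (ha : 0 < a) (hab : a ≤ b) (hb : b ≤ E₀) :
    IntervalIntegrable (fun E => φ E * (E ^ 2 - u ^ 2) ^ m) volume a b :=
  (hφ.intervalIntegrable ha hab hb).mul_continuousOn (continuous_sq_sub_rpow hm u).continuousOn

lemma hfun_eq_zero (hφ : IsEnergyDensity E₀ φ) {u : ℝ} (hu : E₀ ≤ u) : hfun φ E₀ m u = 0 := by
  refine (intervalIntegral.integral_congr (g := fun _ => 0) fun E hE => ?_).trans (by simp)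
  rw [uIcc_of_ge hu] at hE
  simp [hφ.vanish E hE.1]

lemma hfun_nonneg (hφ : IsEnergyDensity E₀ φ) {u : ℝ} (hu : 0 < u) : 0 ≤ hfun φ E₀ m u := by
  rcases le_total E₀ u with h | h
  · exact (hφ.hfun_eq_zero h).ge
  · refine intervalIntegral.integral_nonneg h fun E hE => ?_
    exact mul_nonneg (hφ.nonneg E (hu.trans_le hE.1))
      (Real.rpow_nonneg (sub_nonneg.2 (pow_le_pow_left₀ hu.le hE.1 2)) _)

lemma hfun_sub (hφ : IsEnergyDensity E₀ φ) (hm : 0 < m) {u v : ℝ} (hu : 0 < u) (huv : u ≤ v)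
    (hv : v ≤ E₀) :
    hfun φ E₀ m u - hfun φ E₀ m v = (∫ E in u..v, φ E * (E ^ 2 - u ^ 2) ^ m) +
      ∫ E in v..E₀, φ E * ((E ^ 2 - u ^ 2) ^ m - (E ^ 2 - v ^ 2) ^ m) := by
  have hv0 := hu.trans_le huv
  have h1 := intervalIntegral.integral_add_adjacent_intervals
    (hφ.intervalIntegrable_mul hm u hu huv hv) (hφ.intervalIntegrable_mul hm u hv0 hv le_rfl)
  have h2 := intervalIntegral.integral_sub (hφ.intervalIntegrable_mul hm u hv0 hv le_rfl)
    (hφ.intervalIntegrable_mul hm v hv0 hv le_rfl)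
  simp only [mul_sub, hfun]
  linarith

lemma hfun_anti (hφ : IsEnergyDensity E₀ φ) (hm : 0 < m) {u v : ℝ} (hu : 0 < u) (huv : u ≤ v) :
    hfun φ E₀ m v ≤ hfun φ E₀ m u := by
  rcases le_total E₀ v with h | h
  · rw [hφ.hfun_eq_zero h]
    exact hφ.hfun_nonneg hu
  · have h1 := hφ.hfun_sub hm hu huv h
    have h2 : 0 ≤ ∫ E in u..v, φ E * (E ^ 2 - u ^ 2) ^ m :=
      intervalIntegral.integral_nonneg huv fun E hE =>
        mul_nonneg (hφ.nonneg E (hu.trans_le hE.1))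
          (Real.rpow_nonneg (sub_nonneg.2 (pow_le_pow_left₀ hu.le hE.1 2)) _)
    have h3 : 0 ≤ ∫ E in v..E₀, φ E * ((E ^ 2 - u ^ 2) ^ m - (E ^ 2 - v ^ 2) ^ m) :=
      intervalIntegral.integral_nonneg h fun E hE =>
        mul_nonneg (hφ.nonneg E ((hu.trans_le huv).trans_le hE.1))
          (sq_sub_rpow_mono hm hu huv hE.1)
    linarith

lemma hfun_lipschitz (hφ : IsEnergyDensity E₀ φ) (hm : 0 < m) {α β : ℝ} (hα : 0 < α) (hβ : β < E₀) :
    ∃ L, 0 ≤ L ∧ ∀ u v, α ≤ u → u ≤ v → v ≤ β →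
      hfun φ E₀ m u - hfun φ E₀ m v ≤ L * (v - u) := by
  have hE₀ := hφ.pos
  rcases lt_or_ge β α with hβα | hαβ
  · exact ⟨0, le_rfl, fun u v h1 h2 h3 => by linarith⟩
  have hβ0 : 0 < β := hα.trans_le hαβ
  obtain ⟨γ, hβγ, hγE⟩ := exists_between hβ
  have hγ0 := hβ0.trans hβγ
  obtain ⟨C, hC0, hC⟩ := hφ.bounded α γ hα hγE
  have hδ : 0 < γ ^ 2 - β ^ 2 := sub_pos.2 (pow_lt_pow_left₀ hβγ hβ0.le two_ne_zero)
  have hγE2 : γ ^ 2 ≤ E₀ ^ 2 := pow_le_pow_left₀ hγ0.le hγE.le 2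
  set I := ∫ E in γ..E₀, φ E with hI
  have hI0 : 0 ≤ I := intervalIntegral.integral_nonneg hγE.le fun E hE =>
    hφ.nonneg E (hγ0.trans_le hE.1)
  set K := m * ((E₀ ^ 2) ^ (m - 1) + (γ ^ 2 - β ^ 2) ^ (m - 1)) with hK
  have hK0 : 0 ≤ K := by positivity
  refine ⟨C * (γ ^ 2) ^ m + (C * ((γ ^ 2) ^ m / (2 * α)) + I * K) * (2 * E₀), by positivity,
    fun u v hαu huv hvβ => ?_⟩
  have hu : 0 < u := hα.trans_le hαu
  have hv : 0 < v := hu.trans_le huv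
  have hvγ : v ≤ γ := hvβ.trans hβγ.le
  have hvE : v ≤ E₀ := hvγ.trans hγE.le
  have huv2 : u ^ 2 ≤ v ^ 2 := pow_le_pow_left₀ hu.le huv 2
  have hvβ2 : v ^ 2 ≤ β ^ 2 := pow_le_pow_left₀ hv.le hvβ 2
  have hsq : v ^ 2 - u ^ 2 ≤ 2 * E₀ * (v - u) := by nlinarith
  have hdiff : ∀ {a b : ℝ}, 0 < a → a ≤ b → b ≤ E₀ →
      IntervalIntegrable (fun E => φ E * ((E ^ 2 - u ^ 2) ^ m - (E ^ 2 - v ^ 2) ^ m))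
        volume a b := fun ha hab hb =>
    (hφ.intervalIntegrable ha hab hb).mul_continuousOn
      ((continuous_sq_sub_rpow hm u).sub (continuous_sq_sub_rpow hm v)).continuousOn
  have h1 : ∫ E in u..v, φ E * (E ^ 2 - u ^ 2) ^ m ≤ C * (γ ^ 2) ^ m * (v - u) := by
    calc _ ≤ ∫ _ in u..v, C * (γ ^ 2) ^ m := by
          refine intervalIntegral.integral_mono_on huv
            (hφ.intervalIntegrable_mul hm u hu huv hvE) (by simp) fun E hE => ?_
          have hE0 := hu.le.trans hE.1
          have hE1 : u ^ 2 ≤ E ^ 2 := pow_le_pow_left₀ hu.le hE.1 2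
          have hE2 : E ^ 2 ≤ γ ^ 2 := pow_le_pow_left₀ hE0 (hE.2.trans hvγ) 2
          refine mul_le_mul (hC E ⟨hαu.trans hE.1, hE.2.trans hvγ⟩) ?_
            (Real.rpow_nonneg (by linarith) _) hC0
          exact Real.rpow_le_rpow (by linarith) (by linarith [sq_nonneg u]) hm.le
      _ = _ := by simp; ring
  have h2 : ∫ E in v..γ, φ E * ((E ^ 2 - u ^ 2) ^ m - (E ^ 2 - v ^ 2) ^ m) ≤
      C * ((γ ^ 2) ^ m / (2 * α) * (v ^ 2 - u ^ 2)) := by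
    calc _ ≤ ∫ E in v..γ, C * ((E ^ 2 - u ^ 2) ^ m - (E ^ 2 - v ^ 2) ^ m) := by
          refine intervalIntegral.integral_mono_on hvγ (hdiff hv hvγ hγE.le)
            (Continuous.intervalIntegrable (continuous_const.mul
              ((continuous_sq_sub_rpow hm u).sub (continuous_sq_sub_rpow hm v))) _ _)
            fun E hE => ?_
          exact mul_le_mul_of_nonneg_right (hC E ⟨(hαu.trans huv).trans hE.1, hE.2⟩)
            (sq_sub_rpow_mono hm hu huv hE.1)
      _ ≤ _ := by
          rw [intervalIntegral.integral_const_mul]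
          exact mul_le_mul_of_nonneg_left (integral_sq_sub_rpow_sub_le hm hα hαu huv hvγ) hC0
  have h3 : ∫ E in γ..E₀, φ E * ((E ^ 2 - u ^ 2) ^ m - (E ^ 2 - v ^ 2) ^ m) ≤
      I * (K * (v ^ 2 - u ^ 2)) := by
    calc _ ≤ ∫ E in γ..E₀, φ E * (K * (v ^ 2 - u ^ 2)) := by
          refine intervalIntegral.integral_mono_on hγE.le (hdiff hγ0 hγE.le le_rfl)
            ((hφ.integrable γ hγ0 hγE.le).mul_const _) fun E hE => ?_
          have hE1 : γ ^ 2 ≤ E ^ 2 := pow_le_pow_left₀ hγ0.le hE.1 2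
          have hE2 : E ^ 2 ≤ E₀ ^ 2 := pow_le_pow_left₀ (hγ0.le.trans hE.1) hE.2 2
          refine mul_le_mul_of_nonneg_left ?_ (hφ.nonneg E (hγ0.trans_le hE.1))
          have := rpow_sub_rpow_le_mul (p := m) (A := E ^ 2 - u ^ 2) (B := E ^ 2 - v ^ 2) (K := K)
            hm (by linarith) (by linarith) fun x hx => ?_
          · refine this.trans_eq ?_
            ring
          · have hx1 : γ ^ 2 - β ^ 2 ≤ x := by linarith [hx.1]
            have hx2 : x ≤ E₀ ^ 2 := by linarith [hx.2, sq_nonneg u]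
            have hx0 : 0 < x := hδ.trans_le hx1
            simp only [hK]
            gcongr
            rcases le_total 1 m with h | h
            · exact (Real.rpow_le_rpow hx0.le hx2 (by linarith)).trans
                (le_add_of_nonneg_right (by positivity))
            · exact (Real.rpow_le_rpow_of_nonpos hδ hx1 (by linarith)).trans
                (le_add_of_nonneg_left (by positivity))
      _ = _ := by rw [intervalIntegral.integral_mul_const]
  have h4 := intervalIntegral.integral_add_adjacent_intervals (hdiff hv hvγ hγE.le)
    (hdiff hγ0 hγE.le le_rfl)
  rw [hφ.hfun_sub hm hu huv hvE, ← h4]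
  have h5 : (C * ((γ ^ 2) ^ m / (2 * α)) + I * K) * (v ^ 2 - u ^ 2) ≤
      (C * ((γ ^ 2) ^ m / (2 * α)) + I * K) * (2 * E₀ * (v - u)) := by
    gcongr
  linarith

lemma hfun_le (hφ : IsEnergyDensity E₀ φ) (hm : 0 < m) {u : ℝ} (hu : 0 < u) (huE : u ≤ E₀) :
    hfun φ E₀ m u ≤ (∫ E in u..E₀, φ E) * (E₀ ^ 2) ^ m := by
  rw [← intervalIntegral.integral_mul_const]
  refine intervalIntegral.integral_mono_on huE (hφ.intervalIntegrable_mul hm u hu huE le_rfl)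
    ((hφ.integrable u hu huE).mul_const _) fun E hE => ?_
  have hE1 : u ^ 2 ≤ E ^ 2 := pow_le_pow_left₀ hu.le hE.1 2
  have hE2 : E ^ 2 ≤ E₀ ^ 2 := pow_le_pow_left₀ (hu.le.trans hE.1) hE.2 2
  exact mul_le_mul_of_nonneg_left
    (Real.rpow_le_rpow (by linarith) (by linarith [sq_nonneg u]) hm.le)
    (hφ.nonneg E (hu.trans_le hE.1))

lemma tendsto_integral (hφ : IsEnergyDensity E₀ φ) :
    Filter.Tendsto (fun u => ∫ E in u..E₀, φ E) (nhdsWithin E₀ (Iic E₀)) (nhds 0) := by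
  have hE := hφ.pos
  have hint := hφ.integrable (E₀ / 2) (by linarith) (by linarith)
  have hcont : ContinuousOn (fun u => ∫ E in E₀..u, φ E) (Icc (E₀ / 2) E₀) := by
    have := intervalIntegral.continuousOn_primitive_interval' (a := E₀) hint (by simp)
    rwa [uIcc_of_le (by linarith)] at this
  have h1 := (hcont E₀ ⟨by linarith, le_rfl⟩).neg
  have h2 : nhdsWithin E₀ (Icc (E₀ / 2) E₀) = nhdsWithin E₀ (Iic E₀) := by
    rw [← Ici_inter_Iic]
    exact nhdsWithin_inter_of_mem (mem_nhdsWithin_of_mem_nhds (Ici_mem_nhds (half_lt_self hE)))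
  rw [ContinuousWithinAt, h2] at h1
  simpa [intervalIntegral.integral_symm E₀, Pi.neg_def] using h1

lemma continuousAt_hfun (hφ : IsEnergyDensity E₀ φ) (hm : 0 < m) {u : ℝ} (hu : 0 < u) :
    ContinuousAt (hfun φ E₀ m) u := by
  rcases lt_trichotomy u E₀ with h | rfl | h
  · obtain ⟨β, huβ, hβ⟩ := exists_between h
    obtain ⟨L, hL0, hL⟩ := hφ.hfun_lipschitz hm (half_pos hu) hβ
    have hlip : LipschitzOnWith L.toNNReal (hfun φ E₀ m) (Icc (u / 2) β) := by
      refine LipschitzOnWith.of_le_add_mul _ fun x hx y hy => ?_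
      rw [Real.coe_toNNReal _ hL0, Real.dist_eq]
      rcases le_total x y with hxy | hxy
      · have := hL x y hx.1 hxy hy.2
        rw [abs_sub_comm, abs_of_nonneg (sub_nonneg.2 hxy)]
        linarith
      · have h1 := hφ.hfun_anti hm ((half_pos hu).trans_le hy.1) hxy
        have h2 : 0 ≤ L * |x - y| := by positivity
        linarith
    exact hlip.continuousOn.continuousAt (Icc_mem_nhds (by linarith) huβ)
  · rw [continuousAt_iff_continuous_left'_right']
    have h0 := hφ.hfun_eq_zero (m := m) le_rfl
    constructor
    · have h1 := (hφ.tendsto_integral.mul_const ((u ^ 2) ^ m)).mono_left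
        (nhdsWithin_mono u Iio_subset_Iic_self)
      rw [zero_mul] at h1
      rw [ContinuousWithinAt, h0]
      refine tendsto_of_tendsto_of_tendsto_of_le_of_le' tendsto_const_nhds h1 ?_ ?_
      · filter_upwards [mem_nhdsWithin_of_mem_nhds (Ioi_mem_nhds hu)] with v hv
        exact hφ.hfun_nonneg hv
      · filter_upwards [mem_nhdsWithin_of_mem_nhds (Ioi_mem_nhds hu), self_mem_nhdsWithin]
          with v hv hvu
        exact hφ.hfun_le hm hv (le_of_lt hvu)
    · rw [ContinuousWithinAt, h0]
      refine tendsto_const_nhds.congr' ?_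
      filter_upwards [self_mem_nhdsWithin] with v hv
      exact (hφ.hfun_eq_zero (le_of_lt hv)).symm
  · refine (continuousAt_const (y := (0 : ℝ))).congr ?_
    filter_upwards [Ioi_mem_nhds h] with v hv
    exact (hφ.hfun_eq_zero (le_of_lt hv)).symm

lemma isProfile_hfun_exp (hφ : IsEnergyDensity E₀ φ) (hm : 0 < m) (y₀ : ℝ) :
    IsProfile y₀ (max y₀ (Real.log E₀)) fun y => hfun φ E₀ m (Real.exp y) where
  nonneg y := hφ.hfun_nonneg (Real.exp_pos y)
  anti _ _ h := hφ.hfun_anti hm (Real.exp_pos _) (Real.exp_le_exp.2 h)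
  cont := continuous_iff_continuousAt.2 fun y =>
    (hφ.continuousAt_hfun hm (Real.exp_pos y)).comp Real.continuous_exp.continuousAt
  zero y hy := hφ.hfun_eq_zero
    ((Real.log_le_iff_le_exp hφ.pos).1 ((le_max_right _ _).trans hy))
  lip z hz := by
    rcases lt_or_ge z y₀ with hzy | hzy
    · exact ⟨0, le_rfl, fun a b h1 h2 h3 => by linarith⟩
    have hz' : z < Real.log E₀ := (lt_max_iff.1 hz).resolve_left (not_lt.2 hzy)
    obtain ⟨L, hL0, hL⟩ := hφ.hfun_lipschitz hm (Real.exp_pos y₀)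
      ((Real.lt_log_iff_exp_lt hφ.pos).1 hz')
    refine ⟨L * Real.exp z, by positivity, fun a b ha hab hb => ?_⟩
    refine (hL _ _ (Real.exp_le_exp.2 ha) (Real.exp_le_exp.2 hab) (Real.exp_le_exp.2 hb)).trans ?_
    rw [mul_assoc]
    gcongr
    have h1 : 1 - (b - a) ≤ Real.exp (a - b) := by linarith [Real.add_one_le_exp (a - b)]
    have h2 : Real.exp a = Real.exp b * Real.exp (a - b) := by rw [← Real.exp_add]; ring_nf
    have h3 := Real.exp_le_exp.2 hb
    have h4 := Real.exp_pos b
    nlinarith [sub_nonneg.2 hab]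

end IsEnergyDensity

namespace IsProfile

variable {y₀ y₁ : ℝ} {g q : ℝ → ℝ}

lemma add (hg : IsProfile y₀ y₁ g) (hq : IsProfile y₀ y₁ q) :
    IsProfile y₀ y₁ fun y => g y + q y where
  nonneg y := add_nonneg (hg.nonneg y) (hq.nonneg y)
  anti := hg.anti.add hq.anti
  cont := hg.cont.add hq.cont
  zero y hy := by rw [hg.zero y hy, hq.zero y hy, add_zero]
  lip z hz := by
    obtain ⟨L, hL0, hL⟩ := hg.lip z hz
    obtain ⟨L', hL0', hL'⟩ := hq.lip z hz
    refine ⟨L + L', add_nonneg hL0 hL0', fun a b h1 h2 h3 => ?_⟩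
    linarith [hL a b h1 h2 h3, hL' a b h1 h2 h3]

lemma const_mul (hg : IsProfile y₀ y₁ g) {c : ℝ} (hc : 0 ≤ c) :
    IsProfile y₀ y₁ fun y => c * g y where
  nonneg y := mul_nonneg hc (hg.nonneg y)
  anti _ _ h := mul_le_mul_of_nonneg_left (hg.anti h) hc
  cont := continuous_const.mul hg.cont
  zero y hy := by rw [hg.zero y hy, mul_zero]
  lip z hz := by
    obtain ⟨L, hL0, hL⟩ := hg.lip z hz
    refine ⟨c * L, mul_nonneg hc hL0, fun a b h1 h2 h3 => ?_⟩
    rw [← mul_sub, mul_assoc]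
    exact mul_le_mul_of_nonneg_left (hL a b h1 h2 h3) hc

lemma exp_mul (hg : IsProfile y₀ y₁ g) {c : ℝ} (hc : 0 ≤ c) :
    IsProfile y₀ y₁ fun y => Real.exp (-c * y) * g y where
  nonneg y := mul_nonneg (Real.exp_pos _).le (hg.nonneg y)
  anti a b h := by
    have h1 := hg.anti h
    have h2 := hg.nonneg b
    have h3 : -c * b ≤ -c * a := by nlinarith
    dsimp only
    gcongr
  cont := (Real.continuous_exp.comp (continuous_const.mul continuous_id)).mul hg.cont
  zero y hy := by rw [hg.zero y hy, mul_zero]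
  lip z hz := by
    obtain ⟨L, hL0, hL⟩ := hg.lip z hz
    have hg0 := hg.nonneg y₀
    refine ⟨Real.exp (-c * y₀) * L + c * Real.exp (-c * y₀) * g y₀, by positivity,
      fun a b h1 h2 h3 => ?_⟩
    have e1 : Real.exp (-c * a) ≤ Real.exp (-c * y₀) := Real.exp_le_exp.2 (by nlinarith)
    have e2 : Real.exp (-c * a) - Real.exp (-c * b) ≤ c * Real.exp (-c * y₀) * (b - a) := by
      have h4 : 1 - c * (b - a) ≤ Real.exp (-c * (b - a)) := by
        linarith [Real.add_one_le_exp (-c * (b - a))]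
      have h5 : Real.exp (-c * b) = Real.exp (-c * a) * Real.exp (-c * (b - a)) := by
        rw [← Real.exp_add]; ring_nf
      have h6 := mul_le_mul_of_nonneg_left h4 (Real.exp_pos (-c * a)).le
      have h7 := mul_le_mul_of_nonneg_right e1 (mul_nonneg hc (sub_nonneg.2 h2))
      linarith
    have e3 : g b ≤ g y₀ := hg.anti (h1.trans h2)
    have h8 := sub_nonneg.2 (hg.anti h2)
    have h9 : 0 ≤ Real.exp (-c * a) - Real.exp (-c * b) :=
      sub_nonneg.2 (Real.exp_le_exp.2 (by nlinarith))
    calc Real.exp (-c * a) * g a - Real.exp (-c * b) * g b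
        = Real.exp (-c * a) * (g a - g b) +
          (Real.exp (-c * a) - Real.exp (-c * b)) * g b := by ring
      _ ≤ Real.exp (-c * y₀) * (L * (b - a)) + c * Real.exp (-c * y₀) * (b - a) * g y₀ := by
          have := hL a b h1 h2 h3
          have := hg.nonneg b
          have := sub_nonneg.2 h2
          gcongr
      _ = _ := by ring

end IsProfile

lemma cab_nonneg (a b : ℝ) : 0 ≤ cab a b :=
  intervalIntegral.integral_nonneg zero_le_one fun _ hs =>
    mul_nonneg (Real.rpow_nonneg hs.1 _) (Real.rpow_nonneg (sub_nonneg.2 hs.2) _)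

/-! ### Solutions of a radial system -/

namespace RadialSystem

/-- `C¹` solutions of a radial system on `[0, ∞)` with a regular center. -/
structure IsSolution (S : RadialSystem) (lam mu : ℝ → ℝ) : Prop where
  lam_zero : lam 0 = 0
  mu_zero : mu 0 = S.y₀
  contDiffOn_lam : ContDiffOn ℝ 1 lam (Ici 0)
  contDiffOn_mu : ContDiffOn ℝ 1 mu (Ici 0)
  eq_lam : ∀ r, 0 < r →
    Real.exp (-2 * lam r) * (2 * r * deriv lam r - 1) + 1 = posPow S.n r * S.g (mu r)
  eq_mu : ∀ r, 0 < r →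
    Real.exp (-2 * lam r) * (2 * r * deriv mu r + 1) - 1 = posPow S.n r * S.q (mu r)

variable {S : RadialSystem} {f lam mu : ℝ → ℝ}

lemma hasDerivAt_of_op_eq (hf : S.Adm f) (h : S.op f = f) (r : ℝ) :
    HasDerivAt f (S.slope f r) r := by
  have hc : Continuous f := h ▸ continuous_op hf
  have := hasDerivAt_op hf hc r
  rwa [h] at this

lemma lower_le_coeff_of_op_eq (hf : S.Adm f) (h : S.op f = f) (r : ℝ) :
    S.lower r ≤ S.coeff f r :=
  lower_le_coeff hf (h ▸ continuous_op hf) (fun r _ => S.coeffReg_pos f r) (fun _ _ => le_rfl)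
    (fun r _ => hasDerivAt_of_op_eq hf h r) r

lemma isSolution_of_op_eq (hf : S.Adm f) (h : S.op f = f) :
    S.IsSolution (fun r => -(1 / 2) * Real.log (S.coeff f r)) f := by
  have hc : Continuous f := h ▸ continuous_op hf
  have hlow := lower_le_coeff_of_op_eq hf h
  have hpos : ∀ r, 0 < S.coeff f r := fun r => (S.lower_pos r).trans_le (hlow r)
  have hd := hasDerivAt_of_op_eq hf h
  have hl : ∀ r, HasDerivAt (fun r => -(1 / 2) * Real.log (S.coeff f r))
      (-(1 / 2) * (S.coeffDeriv f r / S.coeff f r)) r := fun r =>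
    ((hasDerivAt_coeff hf hc r).log (hpos r).ne').const_mul _
  have hexp : ∀ r, Real.exp (-2 * (-(1 / 2) * Real.log (S.coeff f r))) = S.coeff f r := by
    intro r
    rw [← mul_assoc]
    norm_num
    exact Real.exp_log (hpos r)
  refine ⟨by simp [coeff_zero], h ▸ op_of_nonpos f le_rfl, ContDiff.contDiffOn ?_,
    ContDiff.contDiffOn ?_, fun r hr => ?_, fun r hr => ?_⟩
  · refine contDiff_one_iff_deriv.2 ⟨fun r => (hl r).differentiableAt, ?_⟩
    rw [show deriv _ = _ from funext fun r => (hl r).deriv]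
    exact continuous_const.mul
      ((continuous_coeffDeriv hf hc).div (continuous_coeff hf) fun r => (hpos r).ne')
  · refine contDiff_one_iff_deriv.2 ⟨fun r => (hd r).differentiableAt, ?_⟩
    rw [show deriv f = _ from funext fun r => (hd r).deriv]
    exact continuous_slope hf hc
  · rw [hexp, (hl r).deriv]
    have h1 : S.coeff f r * (2 * r * (-(1 / 2) * (S.coeffDeriv f r / S.coeff f r)) - 1) + 1 =
        -(r * S.coeffDeriv f r) - S.coeff f r + 1 := by
      have := (hpos r).ne'
      field_simp
    rw [h1, coeffDeriv, coeff]
    field_simp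
    ring
  · rw [hexp, (hd r).deriv, slope, coeffReg, max_eq_left (hlow r)]
    have := (hpos r).ne'
    field_simp
    ring

lemma IsSolution.hasDerivAt_lam (h : S.IsSolution lam mu) {r : ℝ} (hr : 0 < r) :
    HasDerivAt lam (deriv lam r) r :=
  ((h.contDiffOn_lam.differentiableOn one_ne_zero).differentiableAt (Ici_mem_nhds hr)).hasDerivAt

lemma IsSolution.hasDerivAt_mu (h : S.IsSolution lam mu) {r : ℝ} (hr : 0 < r) :
    HasDerivAt mu (deriv mu r) r :=
  ((h.contDiffOn_mu.differentiableOn one_ne_zero).differentiableAt (Ici_mem_nhds hr)).hasDerivAt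

lemma IsSolution.continuous_extend (h : S.IsSolution lam mu) :
    Continuous fun r => mu (max r 0) :=
  h.contDiffOn_mu.continuousOn.comp_continuous (continuous_id.max continuous_const)
    fun _ => mem_Ici.2 (le_max_right _ _)

lemma IsSolution.exp_eq_coeff (h : S.IsSolution lam mu) {r : ℝ} (hr : 0 ≤ r) :
    Real.exp (-2 * lam r) = S.coeff (fun r => mu (max r 0)) r := by
  rcases hr.eq_or_lt with rfl | hr0
  · simp [h.lam_zero, coeff_zero]
  have hν := h.continuous_extend
  have hlam := h.contDiffOn_lam.continuousOn
  have hmass : S.mass (fun r => mu (max r 0)) r = r * (1 - Real.exp (-2 * lam r)) := by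
    rw [mass, intervalIntegral.integral_eq_sub_of_hasDerivAt_of_le
      (f := fun s => s * (1 - Real.exp (-2 * lam s))) hr ?_ ?_ ?_]
    · simp
    · exact (continuousOn_id.mul (continuousOn_const.sub
        (continuousOn_const.mul hlam).rexp)).mono Icc_subset_Ici_self
    · intro s hs
      refine ((hasDerivAt_id s).mul (((h.hasDerivAt_lam hs.1).const_mul (-2)).exp.const_sub
        1)).congr_deriv ?_
      rw [max_eq_left hs.1.le, ← h.eq_lam s hs.1]
      simp only [id]
      ring
    · exact ((continuous_posPow S.n_pos).mul (S.hg.cont.comp hν)).intervalIntegrable _ _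
  rw [coeff, hmass]
  field_simp
  ring

lemma IsSolution.deriv_mu_eq (h : S.IsSolution lam mu) {r : ℝ} (hr : 0 < r) :
    deriv mu r = ((1 + posPow S.n r * S.q (mu r)) / Real.exp (-2 * lam r) - 1) / (2 * r) := by
  rw [← h.eq_mu r hr]
  have := (Real.exp_pos (-2 * lam r)).ne'
  field_simp
  ring

lemma IsSolution.adm (h : S.IsSolution lam mu) : S.Adm fun r => mu (max r 0) := by
  have hmono : MonotoneOn mu (Ici 0) := by
    refine monotoneOn_of_deriv_nonneg (convex_Ici 0) h.contDiffOn_mu.continuousOn ?_ ?_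
    · rw [interior_Ici]
      exact fun r hr => (h.hasDerivAt_mu hr).differentiableAt.differentiableWithinAt
    · rw [interior_Ici]
      intro r hr
      have hr : 0 < r := hr
      have h1 := mul_nonneg (posPow_nonneg S.n r) (S.hq.nonneg (mu r))
      have h2 := h.exp_eq_coeff hr.le ▸ coeff_le_one (S := S) (fun r => mu (max r 0)) r
      rw [h.deriv_mu_eq hr]
      refine div_nonneg (sub_nonneg.2 ?_) (by linarith)
      rw [le_div_iff₀ (Real.exp_pos _)]
      linarith
  refine ⟨fun a b hab => hmono (mem_Ici.2 (le_max_right _ _)) (mem_Ici.2 (le_max_right _ _))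
    (max_le_max_right 0 hab),
    fun r => ?_⟩
  rw [← h.mu_zero]
  exact hmono self_mem_Ici (mem_Ici.2 (le_max_right _ _)) (le_max_right _ _)

lemma IsSolution.hasDerivAt_extend (h : S.IsSolution lam mu) {r : ℝ} (hr : 0 < r) :
    HasDerivAt (fun r => mu (max r 0)) (deriv mu r) r := by
  refine (h.hasDerivAt_mu hr).congr_of_eventuallyEq ?_
  filter_upwards [Ioi_mem_nhds hr] with s hs
  rw [max_eq_left (le_of_lt hs)]

lemma IsSolution.op_eq (h : S.IsSolution lam mu) :
    S.op (fun r => mu (max r 0)) = fun r => mu (max r 0) := by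
  have hadm := h.adm
  have hν := h.continuous_extend
  have hlow := lower_le_coeff (x := fun r => Real.exp (-2 * lam r)) hadm hν
    (fun r _ => Real.exp_pos _) (fun r hr => (h.exp_eq_coeff hr.le).trans_le (le_max_left _ _))
    (fun r hr => (h.hasDerivAt_extend hr).congr_deriv
      (by rw [h.deriv_mu_eq hr, max_eq_left hr.le]))
  have hslope : ∀ r, 0 < r → deriv mu r = S.slope (fun r => mu (max r 0)) r := by
    intro r hr
    rw [h.deriv_mu_eq hr, slope, coeffReg, max_eq_left (hlow r), ← h.exp_eq_coeff hr.le,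
      max_eq_left hr.le]
  funext r
  rcases le_total r 0 with hr | hr
  · rw [op_of_nonpos _ hr, max_eq_right hr, h.mu_zero]
  · rw [op, intervalIntegral.integral_eq_sub_of_hasDerivAt_of_le hr hν.continuousOn
      (fun s hs => (h.hasDerivAt_extend hs.1).congr_deriv (hslope s hs.1))
      ((continuous_slope hadm hν).intervalIntegrable _ _)]
    simp [h.mu_zero]

variable (S) in
theorem exists_unique_isSolution :
    ∃ lam mu, S.IsSolution lam mu ∧ ∀ lam' mu', S.IsSolution lam' mu' →
      EqOn lam lam' (Ici 0) ∧ EqOn mu mu' (Ici 0) := by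
  obtain ⟨f, hf, hop, huniq⟩ := S.exists_unique_fixed_point
  refine ⟨_, f, isSolution_of_op_eq hf hop, fun lam' mu' h => ?_⟩
  have heq := huniq _ h.adm h.op_eq
  refine ⟨fun r hr => ?_, fun r hr => ?_⟩
  · dsimp only
    rw [← heq, ← h.exp_eq_coeff hr, Real.log_exp]
    ring
  · rw [← heq]
    dsimp only
    rw [max_eq_left (mem_Ici.1 hr)]

end RadialSystem

/-- The radial system of the Vlasov-Einstein ansatz `φ(E) L^l`. -/
noncomputable def IsEnergyDensity.radialSystem {E₀ l : ℝ} {φ : ℝ → ℝ} (hφ : IsEnergyDensity E₀ φ)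
    (hl : -(1 / 2 : ℝ) < l) (μ₀ : ℝ) : RadialSystem where
  n := 2 * l + 2
  y₀ := μ₀
  y₁ := max μ₀ (Real.log E₀)
  g y := 16 * Real.pi ^ 2 * cab l (-(1 / 2)) *
    (Real.exp (-(2 * l + 4) * y) * hfun φ E₀ (l + 3 / 2) (Real.exp y) +
      Real.exp (-(2 * l + 2) * y) * hfun φ E₀ (l + 1 / 2) (Real.exp y))
  q y := 16 * Real.pi ^ 2 * cab l (1 / 2) *
    (Real.exp (-(2 * l + 4) * y) * hfun φ E₀ (l + 3 / 2) (Real.exp y))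
  one_lt := by linarith
  le := le_max_left _ _
  hg := (((hφ.isProfile_hfun_exp (by linarith) μ₀).exp_mul (by linarith)).add
    ((hφ.isProfile_hfun_exp (by linarith) μ₀).exp_mul (by linarith))).const_mul
      (mul_nonneg (by positivity) (cab_nonneg _ _))
  hq := ((hφ.isProfile_hfun_exp (by linarith) μ₀).exp_mul (by linarith)).const_mul
    (mul_nonneg (by positivity) (cab_nonneg _ _))

lemma IsEnergyDensity.isSolution_radialSystem_iff {E₀ l : ℝ} {φ : ℝ → ℝ}
    (hφ : IsEnergyDensity E₀ φ) (hl : -(1 / 2 : ℝ) < l) (μ₀ : ℝ) (lam mu : ℝ → ℝ) :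
    (hφ.radialSystem hl μ₀).IsSolution lam mu ↔ IsReducedVESolution E₀ l φ μ₀ lam mu := by
  constructor
  · rintro ⟨h1, h2, h3, h4, h5, h6⟩
    refine ⟨h1, h2, h3, h4, fun r hr => (h5 r hr).trans ?_, fun r hr => (h6 r hr).trans ?_⟩ <;>
    · rw [posPow_of_nonneg (le_of_lt hr)]
      dsimp only [radialSystem]
      ring
  · rintro ⟨h1, h2, h3, h4, h5, h6⟩
    refine ⟨h1, h2, h3, h4, fun r hr => (h5 r hr).trans ?_, fun r hr => (h6 r hr).trans ?_⟩ <;>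
    · rw [posPow_of_nonneg hr.le]
      dsimp only [radialSystem]
      ring

theorem reduced_VE_global_existence_uniqueness
    (E₀ k l : ℝ) (hE₀ : 0 < E₀) (hk : -1 < k) (hl : -(1/2 : ℝ) < l)
    (hkl : 0 < k + l + 3 / 2)
    (φ : ℝ → ℝ) (hmeas : Measurable φ) (hnonneg : ∀ E, 0 < E → 0 ≤ φ E)
    (hvanish : ∀ E, E₀ ≤ E → φ E = 0)
    (hbound : ∀ K : Set ℝ, IsCompact K → K ⊆ Ioi 0 →
      ∃ C : ℝ, 0 ≤ C ∧ ∀ E ∈ K, φ E ≤ C * (max (E₀ - E) 0) ^ k)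
    (μ₀ : ℝ) :
    ∃ lam mu : ℝ → ℝ, IsReducedVESolution E₀ l φ μ₀ lam mu ∧
      ∀ lam' mu' : ℝ → ℝ, IsReducedVESolution E₀ l φ μ₀ lam' mu' →
        EqOn lam lam' (Ici 0) ∧ EqOn mu mu' (Ici 0) := by
  have hφ := isEnergyDensity_of_bound hE₀ hk hmeas hnonneg hvanish hbound
  simp only [← hφ.isSolution_radialSystem_iff hl μ₀]
  exact (hφ.radialSystem hl μ₀).exists_unique_isSolution
end

section
/- Let k, l ∈ ℝ satisfy k > −1, l > −1/2, k + l + 1/2 > 0, and k < l + 3/2. Let φ : ℝ → [0,∞) be measurable, locally essentially bounded on (−∞, E₀), with φ(E) = 0 for E ≥ E₀, and φ(E) = c(E₀ − E)₊^k + O((E₀ − E)₊^{k+δ}) as E → E₀− for some constants c > 0 and δ > 0. Let U ∈ C¹([0,∞)) satisfy U'(r) = (4π/r²)∫₀^r s²ρ(s) ds for r > 0, where ρ(r) = 2^{l+3/2} π c_{l,−1/2} r^{2l} ∫_{U(r)}^{E₀} φ(E)(E − U(r))₊^{l+1/2} dE and c_{l,−1/2} = ∫₀¹ s^l(1−s)^{−1/2}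 ds. Then there exists R < ∞ such that ρ(r) = 0 for all r ≥ R, and the total mass M = 4π∫₀^∞ r²ρ(r) dr is finite. -/
open MeasureTheory Real Set

/-- The spatial mass density of the reduced spherically symmetric steady
Vlasov-Poisson system with ansatz `f = φ(E) L^l`. -/
noncomputable def rhoRed (φ : ℝ → ℝ) (E₀ l : ℝ) (U : ℝ → ℝ) (r : ℝ) : ℝ :=
  2 ^ (l + 3 / 2) * Real.pi *
    (∫ s in (0:ℝ)..1, s ^ l * (1 - s) ^ (-(1/2) : ℝ)) * r ^ (2 * l) *
    ∫ E in (U r)..E₀, φ E * (max (E - U r) 0) ^ (l + 1 / 2)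

open Filter Topology

/-- The energy integral `∫ φ(E) (E - u)₊^p dE` over `[u, E₀]`, as a function of the potential
value `u`. -/
noncomputable def energyMoment (φ : ℝ → ℝ) (E₀ p u : ℝ) : ℝ :=
  ∫ E in u..E₀, φ E * (max (E - u) 0) ^ p

/-- An ansatz function asymptotic to `c (E₀ - E)^k` is comparable to it near the cut-off. -/
lemma exists_comparable_near_cutoff {k E₀ c δ : ℝ} (hc : 0 < c) (hδ : 0 < δ) {φ : ℝ → ℝ}
    (hasymp : ∃ C ε : ℝ, 0 < ε ∧ ∀ E, E₀ - ε < E →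
      |φ E - c * (max (E₀ - E) 0) ^ k| ≤ C * (max (E₀ - E) 0) ^ (k + δ)) :
    ∃ y₀ > 0, ∀ E, E₀ - y₀ < E → E < E₀ →
      c / 2 * (E₀ - E) ^ k ≤ φ E ∧ φ E ≤ 2 * c * (E₀ - E) ^ k := by
  obtain ⟨C, ε, hε, h⟩ := hasymp
  have hlim : Tendsto (fun t : ℝ => C * t ^ δ) (𝓝 0) (𝓝 0) := by
    have := ((Real.continuousAt_rpow_const 0 δ (Or.inr hδ.le)).tendsto).const_mul C
    simpa [Real.zero_rpow hδ.ne'] using this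
  obtain ⟨η, hη, hη'⟩ := Metric.eventually_nhds_iff.1 (hlim.eventually_lt_const (half_pos hc))
  refine ⟨min ε η, lt_min hε hη, fun E hE hE₀ => ?_⟩
  have ht : 0 < E₀ - E := by linarith
  have h1 := h E (by linarith [min_le_left ε η])
  have h2 := @hη' (E₀ - E) (by
    rw [Real.dist_eq, sub_zero, abs_of_pos ht]; linarith [min_le_right ε η])
  rw [max_eq_left ht.le, Real.rpow_add ht] at h1
  have hp : 0 < (E₀ - E) ^ k := Real.rpow_pos_of_pos ht k
  have h3 := mul_le_mul_of_nonneg_right h2.le hp.le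
  rw [abs_le] at h1
  constructor <;> nlinarith [h1.1, h1.2, mul_pos hc hp]

/-- Local boundedness below the cut-off together with an integrable power bound near the cut-off
gives integrability up to the cut-off. -/
lemma intervalIntegrable_of_bound_near_cutoff {k E₀ B y₀ : ℝ} (hk : -1 < k) (hy₀ : 0 < y₀)
    {φ : ℝ → ℝ} (hmeas : Measurable φ) (hnonneg : ∀ E, 0 ≤ φ E)
    (hloc : ∀ K : Set ℝ, IsCompact K → K ⊆ Iio E₀ →
      ∃ C : ℝ, ∀ᵐ E : ℝ, E ∈ K → φ E ≤ C)
    (hφ : ∀ E, E₀ - y₀ < E → E < E₀ → φ E ≤ B * (E₀ - E) ^ k) (u : ℝ) (hu : u ≤ E₀) :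
    IntervalIntegrable φ volume u E₀ := by
  have near : IntervalIntegrable φ volume (E₀ - y₀) E₀ := by
    have hpow : IntervalIntegrable (fun E => B * (E₀ - E) ^ k) volume (E₀ - y₀) E₀ := by
      have h1 := (intervalIntegral.intervalIntegrable_rpow' (a := y₀) (b := 0) hk).comp_sub_left E₀
      simpa using h1.const_mul B
    rw [intervalIntegrable_iff_integrableOn_Ioo_of_le (by linarith)] at hpow ⊢
    refine hpow.mono' hmeas.aestronglyMeasurable ?_
    filter_upwards [ae_restrict_mem measurableSet_Ioo] with E hE
    rw [Real.norm_eq_abs, abs_of_nonneg (hnonneg E)]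
    exact hφ E hE.1 hE.2
  have far : IntervalIntegrable φ volume (min u (E₀ - y₀)) (E₀ - y₀) := by
    obtain ⟨C, hC⟩ := hloc (Icc (min u (E₀ - y₀)) (E₀ - y₀)) isCompact_Icc
      fun E hE => lt_of_le_of_lt hE.2 (by linarith)
    rw [intervalIntegrable_iff_integrableOn_Icc_of_le (min_le_right _ _)]
    refine Measure.integrableOn_of_bounded (M := C) (by simp) hmeas.aestronglyMeasurable ?_
    filter_upwards [ae_restrict_mem measurableSet_Icc, ae_restrict_of_ae hC] with E hE hE'
    rw [Real.norm_eq_abs, abs_of_nonneg (hnonneg E)]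
    exact hE' hE
  refine (far.trans near).mono_set ?_
  rw [uIcc_of_le hu, uIcc_of_le ((min_le_left _ _).trans hu)]
  exact Icc_subset_Icc_left (min_le_left _ _)

section EnergyMoment

variable {φ : ℝ → ℝ} {E₀ p : ℝ}

lemma intervalIntegrable_mul_max_rpow (hp : 0 < p)
    (hint : ∀ u ≤ E₀, IntervalIntegrable φ volume u E₀) {u v : ℝ} (hu : u ≤ E₀) :
    IntervalIntegrable (fun E => φ E * (max (E - v) 0) ^ p) volume u E₀ := by
  refine (hint u hu).mul_continuousOn (Continuous.continuousOn ?_)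
  exact ((continuous_id.sub continuous_const).max continuous_const).rpow_const
    fun _ => Or.inr hp.le

lemma energyMoment_eq_zero (hvanish : ∀ E, E₀ ≤ E → φ E = 0) {u : ℝ} (hu : E₀ ≤ u) :
    energyMoment φ E₀ p u = 0 := by
  refine intervalIntegral.integral_zero_ae (Eventually.of_forall fun E hE => ?_)
  rw [uIoc_of_ge hu] at hE
  rw [hvanish E hE.1.le, zero_mul]

lemma energyMoment_nonneg (hnonneg : ∀ E, 0 ≤ φ E) (hvanish : ∀ E, E₀ ≤ E → φ E = 0) (u : ℝ) :
    0 ≤ energyMoment φ E₀ p u := by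
  rcases le_total u E₀ with hu | hu
  · exact intervalIntegral.integral_nonneg hu fun E _ =>
      mul_nonneg (hnonneg E) (Real.rpow_nonneg (le_max_right _ _) _)
  · exact (energyMoment_eq_zero hvanish hu).ge

lemma antitone_energyMoment (hp : 0 < p) (hnonneg : ∀ E, 0 ≤ φ E)
    (hvanish : ∀ E, E₀ ≤ E → φ E = 0)
    (hint : ∀ u ≤ E₀, IntervalIntegrable φ volume u E₀) :
    Antitone (energyMoment φ E₀ p) := by
  intro u v huv
  rcases le_total E₀ v with hv | hv
  · rw [energyMoment_eq_zero hvanish hv]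
    exact energyMoment_nonneg hnonneg hvanish u
  calc energyMoment φ E₀ p v ≤ ∫ E in v..E₀, φ E * (max (E - u) 0) ^ p := by
        refine intervalIntegral.integral_mono_on hv (intervalIntegrable_mul_max_rpow hp hint hv)
          (intervalIntegrable_mul_max_rpow hp hint hv) fun E _ => ?_
        have := hnonneg E
        gcongr
    _ ≤ energyMoment φ E₀ p u := by
        refine intervalIntegral.integral_mono_interval huv hv le_rfl
          (Eventually.of_forall fun E => ?_)
          (intervalIntegrable_mul_max_rpow hp hint (huv.trans hv))
        exact mul_nonneg (hnonneg E) (Real.rpow_nonneg (le_max_right _ _) _)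

/-- A power lower bound for `φ` near the cut-off yields a power lower bound for its moment. -/
lemma exists_energyMoment_lower_bound {k b y₀ : ℝ} (hp : 0 < p) (hb : 0 < b)
    (hnonneg : ∀ E, 0 ≤ φ E) (hvanish : ∀ E, E₀ ≤ E → φ E = 0)
    (hint : ∀ u ≤ E₀, IntervalIntegrable φ volume u E₀)
    (hφ : ∀ E, E₀ - y₀ < E → E < E₀ → b * (E₀ - E) ^ k ≤ φ E) :
    ∃ κ > 0, ∀ z u, 0 < z → z ≤ y₀ → z ≤ E₀ - u →
      κ * z ^ (k + p + 1) ≤ energyMoment φ E₀ p u := by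
  set q : ℝ := min ((1 / 4 : ℝ) ^ k) ((3 / 4 : ℝ) ^ k) with hq
  have hq0 : 0 < q := lt_min (by positivity) (by positivity)
  refine ⟨b * q * (1 / 4) ^ p * (1 / 2), by positivity, fun z u hz hzy hzu => ?_⟩
  refine le_trans ?_ (antitone_energyMoment hp hnonneg hvanish hint
    (show u ≤ E₀ - z by linarith))
  have hpt : ∀ E ∈ Icc (E₀ - 3 / 4 * z) (E₀ - 1 / 4 * z),
      b * (q * z ^ k) * (1 / 4 * z) ^ p ≤ φ E * (max (E - (E₀ - z)) 0) ^ p := by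
    intro E hE
    obtain ⟨hE1, hE2⟩ := hE
    have h1 := hφ E (by linarith) (by linarith)
    have h2 : q * z ^ k ≤ (E₀ - E) ^ k := by
      rcases le_total 0 k with hk | hk
      · calc q * z ^ k ≤ (1 / 4 : ℝ) ^ k * z ^ k := by gcongr; exact min_le_left _ _
          _ = (1 / 4 * z) ^ k := (Real.mul_rpow (by norm_num) hz.le).symm
          _ ≤ _ := Real.rpow_le_rpow (by positivity) (by linarith) hk
      · calc q * z ^ k ≤ (3 / 4 : ℝ) ^ k * z ^ k := by gcongr; exact min_le_right _ _
          _ = (3 / 4 * z) ^ k := (Real.mul_rpow (by norm_num) hz.le).symm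
          _ ≤ _ := Real.rpow_le_rpow_of_nonpos (by linarith) (by linarith) hk
    have h3 : 1 / 4 * z ≤ max (E - (E₀ - z)) 0 := le_max_of_le_left (by linarith)
    have h4 : b * (q * z ^ k) ≤ φ E := (by gcongr : _ ≤ b * (E₀ - E) ^ k).trans h1
    exact mul_le_mul h4 (Real.rpow_le_rpow (by positivity) h3 hp.le) (by positivity) (hnonneg E)
  have hI : IntervalIntegrable (fun E => φ E * (max (E - (E₀ - z)) 0) ^ p) volume
      (E₀ - z) E₀ := intervalIntegrable_mul_max_rpow hp hint (by linarith)
  calc b * q * (1 / 4) ^ p * (1 / 2) * z ^ (k + p + 1)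
      = ∫ _E in (E₀ - 3 / 4 * z)..(E₀ - 1 / 4 * z), b * (q * z ^ k) * (1 / 4 * z) ^ p := by
        rw [intervalIntegral.integral_const, smul_eq_mul, Real.mul_rpow (by norm_num) hz.le,
          Real.rpow_add hz, Real.rpow_add hz, Real.rpow_one]
        ring
    _ ≤ ∫ E in (E₀ - 3 / 4 * z)..(E₀ - 1 / 4 * z), φ E * (max (E - (E₀ - z)) 0) ^ p := by
        refine intervalIntegral.integral_mono_on (by linarith) (by simp) (hI.mono_set ?_) hpt
        rw [uIcc_of_le (by linarith), uIcc_of_le (by linarith)]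
        exact Icc_subset_Icc (by linarith) (by linarith)
    _ ≤ energyMoment φ E₀ p (E₀ - z) := by
        refine intervalIntegral.integral_mono_interval (by linarith) (by linarith) (by linarith)
          (Eventually.of_forall fun E => ?_) hI
        exact mul_nonneg (hnonneg E) (Real.rpow_nonneg (le_max_right _ _) _)

end EnergyMoment

/-- A function with nonpositive derivative on `[a, ∞)` is nonincreasing there. -/
lemma le_of_hasDerivAt_nonpos {f f' : ℝ → ℝ} {a x y : ℝ} (hf : ∀ r, a ≤ r → HasDerivAt f (f' r) r)
    (hf' : ∀ r, a ≤ r → f' r ≤ 0) (hx : a ≤ x) (hxy : x ≤ y) : f y ≤ f x := by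
  refine antitoneOn_of_hasDerivWithinAt_nonpos (convex_Ici a) (f' := f')
    (fun r hr => (hf r hr).continuousAt.continuousWithinAt) (fun r hr => ?_) (fun r hr => ?_)
    hx (hx.trans hxy) hxy
  · exact (hf r (interior_subset hr)).hasDerivWithinAt
  · exact hf' r (interior_subset hr)

/-- A Lane–Emden type inequality has no solution which stays positive: if `y' = -m / r ^ 2` with
`m` bounded below by its positive value at `1` and `m r ≥ a * r ^ (σ + 1) * min (y r) y₀ ^ n`,
where `1 < n < σ + 1`, then `y` cannot be positive on `[1, ∞)`. -/
lemma exists_nonpos_of_laneEmden {y m : ℝ → ℝ} {a y₀ n σ : ℝ} (ha : 0 < a) (hy₀ : 0 < y₀)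
    (hn : 1 < n) (hnσ : n < σ + 1) (hσ : 1 ≤ σ)
    (hy : ∀ r, 1 ≤ r → HasDerivAt y (-(m r / r ^ 2)) r)
    (hm1 : ∀ r, 1 ≤ r → m 1 ≤ m r)
    (hm : ∀ r, 1 ≤ r → 0 < y r → a * r ^ (σ + 1) * (min (y r) y₀) ^ n ≤ m r) :
    ∃ r, 1 ≤ r ∧ y r ≤ 0 := by
  by_contra! hpos
  have hm' : ∀ r, 1 ≤ r → a * r ^ (σ - 1) * (min (y r) y₀) ^ n ≤ m r / r ^ 2 := by
    intro r hr
    have hr0 : 0 < r := by linarith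
    rw [le_div_iff₀ (by positivity)]
    refine le_trans (le_of_eq ?_) (hm r hr (hpos r hr))
    rw [show σ + 1 = (σ - 1) + (2 : ℕ) by push_cast; ring, Real.rpow_add hr0, Real.rpow_natCast]
    ring
  have hm1pos : 0 < m 1 := by
    have h1 := hpos 1 le_rfl
    have : 0 < min (y 1) y₀ := lt_min h1 hy₀
    exact lt_of_lt_of_le (by positivity) (hm 1 le_rfl h1)
  have hanti : ∀ r s, 1 ≤ r → r ≤ s → y s ≤ y r := by
    intro r s hr hrs
    refine le_of_hasDerivAt_nonpos hy (fun t ht => ?_) hr hrs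
    have := hm1pos.trans_le (hm1 t ht)
    have : 0 ≤ m t / t ^ 2 := by positivity
    linarith
  have hsmall : ∃ r₁, 1 ≤ r₁ ∧ y r₁ ≤ y₀ := by
    by_contra! hbig
    have hA : 0 < a * y₀ ^ n := by positivity
    have hlin : ∀ r, 1 ≤ r → y r + a * y₀ ^ n * r ≤ y 1 + a * y₀ ^ n * 1 := by
      intro r hr
      refine le_of_hasDerivAt_nonpos (f := fun r => y r + a * y₀ ^ n * r)
        (f' := fun r => -(m r / r ^ 2) + a * y₀ ^ n * 1)
        (fun t ht => (hy t ht).add ((hasDerivAt_id t).const_mul _)) (fun t ht => ?_) le_rfl hr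
      have h1 := hm' t ht
      rw [min_eq_right (hbig t ht).le] at h1
      have h2 : 1 ≤ t ^ (σ - 1) := Real.one_le_rpow ht (by linarith)
      have h3 : a * y₀ ^ n * 1 ≤ a * y₀ ^ n * t ^ (σ - 1) := by gcongr
      linarith
    have h1 := hpos 1 le_rfl
    have h2 := hlin (1 + y 1 / (a * y₀ ^ n)) (by
      have : 0 ≤ y 1 / (a * y₀ ^ n) := by positivity
      linarith)
    have h3 := hbig (1 + y 1 / (a * y₀ ^ n)) (by
      have : 0 ≤ y 1 / (a * y₀ ^ n) := by positivity
      linarith)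
    have h4 : a * y₀ ^ n * (1 + y 1 / (a * y₀ ^ n)) = a * y₀ ^ n + y 1 := by
      field_simp
    linarith
  obtain ⟨r₁, hr₁, hyr₁⟩ := hsmall
  have hlower : ∀ r, 1 ≤ r → m 1 / 2 * r⁻¹ ≤ y r := by
    intro r hr
    have h1 : y (2 * r) - m 1 * (2 * r)⁻¹ ≤ y r - m 1 * r⁻¹ := by
      refine le_of_hasDerivAt_nonpos (f := fun r => y r - m 1 * r⁻¹)
        (f' := fun r => -(m r / r ^ 2) - m 1 * (-(r ^ 2)⁻¹)) (a := 1)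
        (fun t ht => (hy t ht).sub ((hasDerivAt_inv (by linarith)).const_mul _))
        (fun t ht => ?_) hr (by linarith)
      have : m 1 / t ^ 2 ≤ m t / t ^ 2 := by gcongr; exact hm1 t ht
      rw [div_eq_mul_inv (m 1)] at this
      linarith
    have h2 := hpos (2 * r) (by linarith)
    rw [mul_inv] at h1
    linarith
  have hσ0 : 0 < σ := by linarith
  set b := (n - 1) * a / σ with hb
  have hb0 : 0 < b := div_pos (mul_pos (by linarith) ha) hσ0
  have hupper : ∀ r, r₁ ≤ r → b * r ^ σ - b * r₁ ^ σ ≤ y r ^ (1 - n) := by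
    intro r hr
    have h1 : b * r ^ σ - y r ^ (1 - n) ≤ b * r₁ ^ σ - y r₁ ^ (1 - n) := by
      refine le_of_hasDerivAt_nonpos (f := fun r => b * r ^ σ - y r ^ (1 - n))
        (f' := fun r => b * (σ * r ^ (σ - 1)) -
          -(m r / r ^ 2) * (1 - n) * y r ^ (1 - n - 1)) (a := r₁)
        (fun t ht => ?_) (fun t ht => ?_) le_rfl hr
      · exact ((Real.hasDerivAt_rpow_const (Or.inl (by linarith))).const_mul b).sub
          ((hy t (hr₁.trans ht)).rpow_const (Or.inl (hpos t (hr₁.trans ht)).ne'))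
      · have ht1 := hr₁.trans ht
        have hyt := hpos t ht1
        have h1 := hm' t ht1
        rw [min_eq_left ((hanti r₁ t hr₁ ht).trans hyr₁)] at h1
        have h2 : y t ^ n * y t ^ (1 - n - 1) = 1 := by
          rw [← Real.rpow_add hyt]; simp
        have h3 : a * t ^ (σ - 1) ≤ m t / t ^ 2 * y t ^ (1 - n - 1) := by
          calc a * t ^ (σ - 1) = a * t ^ (σ - 1) * y t ^ n * y t ^ (1 - n - 1) := by
                rw [mul_assoc _ (y t ^ n), h2, mul_one]
            _ ≤ _ := by gcongr
        have h4 : b * (σ * t ^ (σ - 1)) = (n - 1) * (a * t ^ (σ - 1)) := by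
          rw [hb]; field_simp
        have h5 := mul_le_mul_of_nonneg_left h3 (show 0 ≤ n - 1 by linarith)
        rw [h4]
        linarith
    have := Real.rpow_nonneg (hpos r₁ hr₁).le (1 - n)
    linarith
  set D := (m 1 / 2) ^ (1 - n) with hD
  have hbound : ∀ r, r₁ ≤ r → b * r ^ (σ - (n - 1)) ≤ D + b * r₁ ^ σ := by
    intro r hr
    have hr1 := hr₁.trans hr
    have hr0 : 0 < r := by linarith
    have h1 : y r ^ (1 - n) ≤ D * r ^ (n - 1) := by
      calc y r ^ (1 - n) ≤ (m 1 / 2 * r⁻¹) ^ (1 - n) :=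
            Real.rpow_le_rpow_of_nonpos (by positivity) (hlower r hr1) (by linarith)
        _ = D * r ^ (n - 1) := by
            rw [Real.mul_rpow (by positivity) (by positivity), Real.inv_rpow hr0.le,
              ← Real.rpow_neg hr0.le, neg_sub]
    have h2 := hupper r hr
    have h3 : r ^ σ = r ^ (σ - (n - 1)) * r ^ (n - 1) := by
      rw [← Real.rpow_add hr0]; ring_nf
    have h4 : 1 ≤ r ^ (n - 1) := Real.one_le_rpow hr1 (by linarith)
    have h5 : 0 ≤ b * r₁ ^ σ := by positivity
    have h6 : b * r ^ (σ - (n - 1)) * r ^ (n - 1) ≤ (D + b * r₁ ^ σ) * r ^ (n - 1) := by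
      rw [h3] at h2
      nlinarith
    exact le_of_mul_le_mul_right h6 (by linarith)
  have hlim := (tendsto_rpow_atTop (show 0 < σ - (n - 1) by linarith)).const_mul_atTop hb0
  obtain ⟨r, hr, hr'⟩ :=
    ((hlim.eventually_gt_atTop (D + b * r₁ ^ σ)).and (eventually_ge_atTop r₁)).exists
  exact absurd (hbound r hr') (not_le.2 hr)

theorem main_nonrelativistic
    (k l E₀ c δ : ℝ) (hk : -1 < k) (hl : -(1/2 : ℝ) < l)
    (hkl : 0 < k + l + 1 / 2) (hkl' : k < l + 3 / 2)
    (hc : 0 < c) (hδ : 0 < δ)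
    (φ : ℝ → ℝ) (hmeas : Measurable φ) (hnonneg : ∀ E, 0 ≤ φ E)
    (hvanish : ∀ E, E₀ ≤ E → φ E = 0)
    (hloc : ∀ K : Set ℝ, IsCompact K → K ⊆ Iio E₀ →
      ∃ C : ℝ, ∀ᵐ E : ℝ, E ∈ K → φ E ≤ C)
    (hasymp : ∃ C ε : ℝ, 0 < ε ∧ ∀ E, E₀ - ε < E →
      |φ E - c * (max (E₀ - E) 0) ^ k| ≤ C * (max (E₀ - E) 0) ^ (k + δ))
    (U : ℝ → ℝ) (hUC1 : ContDiffOn ℝ 1 U (Ici 0))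
    (hU : ∀ r ∈ Ioi (0 : ℝ), HasDerivAt U
      ((4 * Real.pi / r ^ 2) * ∫ s in (0:ℝ)..r, s ^ 2 * rhoRed φ E₀ l U s) r) :
    (∃ R : ℝ, ∀ r, R ≤ r → rhoRed φ E₀ l U r = 0) ∧
      IntegrableOn (fun r => r ^ 2 * rhoRed φ E₀ l U r) (Ioi 0) := by
  obtain ⟨y₀, hy₀, hφ⟩ := exists_comparable_near_cutoff hc hδ hasymp
  have hp : 0 < l + 1 / 2 := by linarith
  have hint := intervalIntegrable_of_bound_near_cutoff hk hy₀ hmeas hnonneg hloc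
    fun E h h' => (hφ E h h').2
  obtain ⟨κ, hκ, hlow⟩ := exists_energyMoment_lower_bound (k := k) hp (half_pos hc) hnonneg
    hvanish hint fun E h h' => (hφ E h h').1
  have hGanti := antitone_energyMoment hp hnonneg hvanish hint
  have hG0 := energyMoment_nonneg (p := l + 1 / 2) hnonneg hvanish
  set G := energyMoment φ E₀ (l + 1 / 2) with hG
  set K : ℝ := 2 ^ (l + 3 / 2) * Real.pi *
    (∫ s in (0:ℝ)..1, s ^ l * (1 - s) ^ (-(1/2) : ℝ)) with hKdef
  have hK : 0 ≤ K := by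
    refine mul_nonneg (by positivity) (intervalIntegral.integral_nonneg zero_le_one fun s hs => ?_)
    exact mul_nonneg (Real.rpow_nonneg hs.1 _) (Real.rpow_nonneg (by linarith [hs.2]) _)
  have hρ : ∀ r, rhoRed φ E₀ l U r = K * r ^ (2 * l) * G (U r) := fun r => rfl
  set f : ℝ → ℝ := fun r => r ^ 2 * rhoRed φ E₀ l U r with hf
  have hf_eq : ∀ r, 0 < r → f r = K * r ^ (2 + 2 * l) * G (U r) := by
    intro r hr
    rw [hf]
    simp only [hρ]
    rw [Real.rpow_add hr, Real.rpow_two]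
    ring
  have hf0 : ∀ r, 0 ≤ r → 0 ≤ f r := by
    intro r hr
    simp only [hf, hρ]
    exact mul_nonneg (sq_nonneg r) (mul_nonneg (mul_nonneg hK (Real.rpow_nonneg hr _)) (hG0 _))
  have hUcont : ContinuousOn U (Ici 0) := hUC1.continuousOn
  have hUmono : MonotoneOn U (Ici 0) := by
    refine monotoneOn_of_hasDerivWithinAt_nonneg (convex_Ici 0) hUcont
      (fun r hr => (hU r (by simpa using hr)).hasDerivWithinAt) fun r hr => ?_
    have hr0 : 0 < r := by simpa using hr
    exact mul_nonneg (by positivity) (intervalIntegral.integral_nonneg hr0.le fun s hs => hf0 s hs.1)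
  have hfint : ∀ r, 0 ≤ r → IntegrableOn f (Ioc 0 r) := by
    intro r hr
    have hpow : IntegrableOn (fun s : ℝ => K * s ^ (2 + 2 * l) * G (U 0)) (Ioc 0 r) := by
      have := intervalIntegral.intervalIntegrable_rpow' (a := 0) (b := r)
        (show -1 < 2 + 2 * l by linarith)
      exact (((intervalIntegrable_iff_integrableOn_Ioc_of_le hr).1 this).const_mul K).mul_const _
    refine hpow.mono' ?_ ?_
    · have hUm : AEMeasurable U (volume.restrict (Ioc 0 r)) :=
        (hUcont.mono fun s hs => hs.1.le).aemeasurable measurableSet_Ioc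
      have h1 : AEMeasurable (fun s => G (U s)) (volume.restrict (Ioc 0 r)) :=
        hGanti.measurable.comp_aemeasurable hUm
      have h2 : AEMeasurable (fun s : ℝ => s ^ 2 * (K * s ^ (2 * l) * G (U s)))
          (volume.restrict (Ioc 0 r)) :=
        (measurable_id.pow_const 2).aemeasurable.mul
          (((measurable_id.pow_const (2 * l)).const_mul K).aemeasurable.mul h1)
      exact h2.aestronglyMeasurable
    · filter_upwards [ae_restrict_mem measurableSet_Ioc] with s hs
      rw [Real.norm_eq_abs, abs_of_nonneg (hf0 s hs.1.le), hf_eq s hs.1]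
      have hs0 := hs.1
      gcongr
      exact hGanti (hUmono (mem_Ici.2 le_rfl) (mem_Ici.2 hs.1.le) hs.1.le)
  suffices h : ∃ R, 0 ≤ R ∧ ∀ r, R ≤ r → rhoRed φ E₀ l U r = 0 by
    obtain ⟨R, hR0, hR⟩ := h
    refine ⟨⟨R, hR⟩, ?_⟩
    rw [← Ioc_union_Ioi_eq_Ioi hR0]
    refine (hfint R hR0).union (integrableOn_zero.congr_fun (fun r hr => ?_) measurableSet_Ioi)
    simp [hf, hR r (le_of_lt hr)]
  rcases hK.eq_or_lt with hK0 | hKpos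
  · exact ⟨0, le_rfl, fun r _ => by rw [hρ, ← hK0]; ring⟩
  suffices h : ∃ r, 1 ≤ r ∧ E₀ - U r ≤ 0 by
    obtain ⟨R, hR1, hR⟩ := h
    have hR0 : 0 ≤ R := by linarith
    refine ⟨R, hR0, fun r hr => ?_⟩
    have : U R ≤ U r := hUmono hR0 (hR0.trans hr) hr
    rw [hρ, hG, energyMoment_eq_zero hvanish (by linarith), mul_zero]
  refine exists_nonpos_of_laneEmden (y := fun r => E₀ - U r)
    (m := fun r => 4 * Real.pi * ∫ s in (0:ℝ)..r, f s) (y₀ := y₀)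
    (a := 4 * Real.pi * (K * κ / (3 + 2 * l))) (n := k + (l + 1 / 2) + 1) (σ := 2 + 2 * l)
    ?_ hy₀ (by linarith) (by linarith) (by linarith) ?_ ?_ ?_
  · have : 0 < 3 + 2 * l := by linarith
    positivity
  · intro r hr
    refine ((hU r (mem_Ioi.2 (by linarith))).const_sub E₀).congr_deriv ?_
    rw [div_mul_eq_mul_div]
  · intro r hr
    have h0 : (0 : ℝ) ≤ r := by linarith
    refine mul_le_mul_of_nonneg_left ?_ (by positivity)
    refine intervalIntegral.integral_mono_interval le_rfl zero_le_one hr ?_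
      ((intervalIntegrable_iff_integrableOn_Ioc_of_le h0).2 (hfint r h0))
    filter_upwards [ae_restrict_mem measurableSet_Ioc] with s hs using hf0 s hs.1.le
  · intro r hr hyr
    have hr0 : 0 < r := by linarith
    set z := min (E₀ - U r) y₀ with hz
    have hz0 : 0 < z := lt_min hyr hy₀
    have hl3 : 0 < 3 + 2 * l := by linarith
    have hpw := intervalIntegral.intervalIntegrable_rpow' (a := 0) (b := r)
      (show -1 < 2 + 2 * l by linarith)
    have key : ∫ s in (0:ℝ)..r, K * κ * z ^ (k + (l + 1 / 2) + 1) * s ^ (2 + 2 * l)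
        ≤ ∫ s in (0:ℝ)..r, f s := by
      refine intervalIntegral.integral_mono_on_of_le_Ioo hr0.le (hpw.const_mul _)
        ((intervalIntegrable_iff_integrableOn_Ioc_of_le hr0.le).2 (hfint r hr0.le))
        fun s hs => ?_
      have hs0 : 0 < s := hs.1
      have hUs : U s ≤ U r := hUmono hs0.le hr0.le hs.2.le
      have h1 := hlow z (U s) hz0 (min_le_right _ _)
        ((min_le_left _ _).trans (by linarith))
      rw [hf_eq s hs0]
      calc _ = K * s ^ (2 + 2 * l) * (κ * z ^ (k + (l + 1 / 2) + 1)) := by ring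
        _ ≤ _ := by gcongr
    rw [intervalIntegral.integral_const_mul, integral_rpow (Or.inl (by linarith)),
      Real.zero_rpow (by linarith), sub_zero] at key
    have h4 := mul_le_mul_of_nonneg_left key (show 0 ≤ 4 * Real.pi by positivity)
    refine le_trans (le_of_eq ?_) h4
    rw [show 2 + 2 * l + 1 = 3 + 2 * l by ring]
    ring
end

section
/- Let R ∈ (0, ∞], c > 0, and let x, y ∈ C¹((0,R)) with x > 0 and y > 0 on (0,R) satisfy r x'(r) = α(r) y(r) − x(r) + x(r)·(x(r) + γ₁(r) y(r))/(1 − γ₂(r) x(r)) and r y'(r) = y(r)·(c − β(r)·(x(r) + γ₁(r) y(r))/(1 − γ₂(r) x(r))) on (0,R), where α, β, γ₁, γ₂ ∈ C((0,R)) satisfy: inf_{r∈(0,R)} α(r) > 0; lim_{r→R} β(r) = β₀ for some β₀ ∈ (0, c); γ₁ ≥ 0 and γ₂ ≥ 0 with lim_{r→R} γ₁(r) = lim_{r→R} γ₂(r) = 0; and 1 − γ₂(r) x(r) > 0 for all r ∈ (0,R). Then R < ∞. -/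
open MeasureTheory Real Set Filter

/-- The filter of real numbers `r` tending to `R ∈ (0,∞]` from the left. -/
noncomputable def leftLim (R : EReal) : Filter ℝ :=
  Filter.comap (fun r : ℝ => (r : EReal)) (nhdsWithin R (Iio R))

/-- A function whose derivative is nonnegative on `[r₀, ∞)` stays above its value at `r₀`. -/
theorem le_of_forall_hasDerivAt_nonneg {f f' : ℝ → ℝ} {r₀ : ℝ}
    (hf : ∀ r, r₀ ≤ r → HasDerivAt f (f' r) r) (hf' : ∀ r, r₀ ≤ r → 0 ≤ f' r)
    {r : ℝ} (hr : r₀ ≤ r) : f r₀ ≤ f r := by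
  have hmono : MonotoneOn f (Ici r₀) := by
    refine monotoneOn_of_hasDerivWithinAt_nonneg (f' := f') (convex_Ici r₀)
      (fun s hs => (hf s hs).continuousAt.continuousWithinAt) ?_ ?_
    · intro s hs
      exact (hf s (interior_subset hs)).hasDerivWithinAt
    · intro s hs
      exact hf' s (interior_subset hs)
  exact hmono self_mem_Ici hr hr

/-- A positive function with `r x' ≥ x² / 2` cannot exist on a whole half-line. -/
theorem not_forall_sq_div_two_le_mul_deriv {x x' : ℝ → ℝ} {r₀ : ℝ} (hr₀ : 0 < r₀)
    (hx : ∀ r, r₀ ≤ r → HasDerivAt x (x' r) r) (hxpos : ∀ r, r₀ ≤ r → 0 < x r) :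
    ¬ ∀ r, r₀ ≤ r → x r ^ 2 / 2 ≤ r * x' r := by
  intro h
  have hmono : ∀ r, r₀ ≤ r → -(x r₀)⁻¹ - log r₀ / 2 ≤ -(x r)⁻¹ - log r / 2 := by
    intro r hr
    refine le_of_forall_hasDerivAt_nonneg (f := fun r => -(x r)⁻¹ - log r / 2)
      (f' := fun r => -(-x' r / x r ^ 2) - r⁻¹ / 2) ?_ ?_ hr
    · intro s hs
      exact (((hx s hs).inv (hxpos s hs).ne').neg).sub
        ((hasDerivAt_log (hr₀.trans_le hs).ne').div_const 2)
    · intro s hs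
      have hs0 : 0 < s := hr₀.trans_le hs
      have hxs := hxpos s hs
      have : -(-x' s / x s ^ 2) - s⁻¹ / 2 = (s * x' s - x s ^ 2 / 2) / (s * x s ^ 2) := by
        field_simp
      rw [this]
      exact div_nonneg (sub_nonneg.2 (h s hs)) (by positivity)
  obtain ⟨r, hlog, hr⟩ := ((tendsto_log_atTop.eventually_ge_atTop
    (2 * (x r₀)⁻¹ + log r₀)).and (eventually_ge_atTop r₀)).exists
  have hinv : 0 < (x r)⁻¹ := inv_pos.2 (hxpos r hr)
  linarith [hmono r hr]

/-- If `r (log x)' = A / x - 1 + Z` and `r (log y)' = c - β Z` with `A, Z ≥ 0`, and `β ≤ b < c` with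
`b ≥ 0`, then `x ^ b * y` grows at least like a multiple of `r ^ (c - b)`. -/
theorem exists_log_lower_bound {x y x' y' A Z β : ℝ → ℝ} {b c r₀ : ℝ} (hr₀ : 0 < r₀) (hb : 0 ≤ b)
    (hx : ∀ r, r₀ ≤ r → HasDerivAt x (x' r) r) (hy : ∀ r, r₀ ≤ r → HasDerivAt y (y' r) r)
    (hxpos : ∀ r, r₀ ≤ r → 0 < x r) (hypos : ∀ r, r₀ ≤ r → 0 < y r)
    (hA : ∀ r, r₀ ≤ r → 0 ≤ A r) (hZ : ∀ r, r₀ ≤ r → 0 ≤ Z r) (hβ : ∀ r, r₀ ≤ r → β r ≤ b)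
    (hx' : ∀ r, r₀ ≤ r → r * x' r = A r - x r + x r * Z r)
    (hy' : ∀ r, r₀ ≤ r → r * y' r = y r * (c - β r * Z r)) :
    ∃ K : ℝ, ∀ r, r₀ ≤ r → K + (c - b) * log r ≤ b * log (x r) + log (y r) := by
  refine ⟨b * log (x r₀) + log (y r₀) - (c - b) * log r₀, fun r hr => ?_⟩
  have hmono : b * log (x r₀) + log (y r₀) - (c - b) * log r₀
      ≤ b * log (x r) + log (y r) - (c - b) * log r := by
    refine le_of_forall_hasDerivAt_nonneg
      (f := fun r => b * log (x r) + log (y r) - (c - b) * log r)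
      (f' := fun r => b * (x' r / x r) + y' r / y r - (c - b) * r⁻¹) ?_ ?_ hr
    · intro s hs
      exact ((((hx s hs).log (hxpos s hs).ne').const_mul b).add
        ((hy s hs).log (hypos s hs).ne')).sub
        ((hasDerivAt_log (hr₀.trans_le hs).ne').const_mul (c - b))
    · intro s hs
      have hs0 : 0 < s := hr₀.trans_le hs
      have hxs := hxpos s hs
      have hys := hypos s hs
      have hx's : x' s = (A s - x s + x s * Z s) / s := by
        rw [← hx' s hs]
        field_simp
      have hy's : y' s = y s * (c - β s * Z s) / s := by
        rw [← hy' s hs]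
        field_simp
      have : b * (x' s / x s) + y' s / y s - (c - b) * s⁻¹
          = (b * (A s / x s) + (b - β s) * Z s) / s := by
        rw [hx's, hy's]
        field_simp
        ring
      rw [this]
      have hAs := hA s hs
      have := mul_nonneg (sub_nonneg.2 (hβ s hs)) (hZ s hs)
      positivity
  linarith

theorem makino_lemma
    (R : EReal) (hR : 0 < R) (c : ℝ) (hc : 0 < c)
    (x y x' y' α β γ₁ γ₂ : ℝ → ℝ)
    (D : Set ℝ) (hD : D = {r : ℝ | 0 < r ∧ (r : EReal) < R})
    (hx : ∀ r ∈ D, HasDerivAt x (x' r) r)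
    (hy : ∀ r ∈ D, HasDerivAt y (y' r) r)
    (hx'c : ContinuousOn x' D) (hy'c : ContinuousOn y' D)
    (hxpos : ∀ r ∈ D, 0 < x r) (hypos : ∀ r ∈ D, 0 < y r)
    (hαc : ContinuousOn α D) (hβc : ContinuousOn β D)
    (hγ₁c : ContinuousOn γ₁ D) (hγ₂c : ContinuousOn γ₂ D)
    (heq1 : ∀ r ∈ D, r * x' r =
      α r * y r - x r + x r * (x r + γ₁ r * y r) / (1 - γ₂ r * x r))
    (heq2 : ∀ r ∈ D, r * y' r =
      y r * (c - β r * (x r + γ₁ r * y r) / (1 - γ₂ r * x r)))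
    (hα : ∃ a : ℝ, 0 < a ∧ ∀ r ∈ D, a ≤ α r)
    (β₀ : ℝ) (hβ₀pos : 0 < β₀) (hβ₀c : β₀ < c)
    (hβlim : Tendsto β (leftLim R ⊓ Filter.principal D) (nhds β₀))
    (hγ₁nonneg : ∀ r ∈ D, 0 ≤ γ₁ r) (hγ₂nonneg : ∀ r ∈ D, 0 ≤ γ₂ r)
    (hγ₁lim : Tendsto γ₁ (leftLim R ⊓ Filter.principal D) (nhds 0))
    (hγ₂lim : Tendsto γ₂ (leftLim R ⊓ Filter.principal D) (nhds 0))
    (hdenom : ∀ r ∈ D, 0 < 1 - γ₂ r * x r) :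
    R < ⊤ := by
  by_contra hRtop
  obtain rfl : R = ⊤ := not_lt_top_iff.1 hRtop
  have hmem : ∀ r : ℝ, 0 < r → r ∈ D := fun r hr => by
    rw [hD]
    exact ⟨hr, EReal.coe_lt_top r⟩
  have hfilter : (atTop : Filter ℝ) ≤ leftLim ⊤ ⊓ principal D := by
    refine le_inf (map_le_iff_le_comap.1 ?_)
      (le_principal_iff.2 ((eventually_gt_atTop 0).mono hmem))
    exact tendsto_nhdsWithin_iff.2
      ⟨EReal.tendsto_coe_atTop, Eventually.of_forall EReal.coe_lt_top⟩
  obtain ⟨a, ha, haα⟩ := hα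
  obtain ⟨b, hβ₀b, hbc⟩ := exists_between hβ₀c
  have hb : 0 < b := hβ₀pos.trans hβ₀b
  obtain ⟨r₁, hr₁⟩ := eventually_atTop.1
    ((hβlim.mono_left hfilter).eventually (eventually_le_nhds hβ₀b))
  set r₀ := max r₁ 1
  have hr₀ : 0 < r₀ := zero_lt_one.trans_le (le_max_right _ _)
  have hmem₀ : ∀ r, r₀ ≤ r → r ∈ D := fun r hr => hmem r (hr₀.trans_le hr)
  set Z : ℝ → ℝ := fun r => (x r + γ₁ r * y r) / (1 - γ₂ r * x r) with hZdef
  have hxZ : ∀ r ∈ D, x r ≤ Z r := by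
    intro r hr
    rw [hZdef, le_div_iff₀ (hdenom r hr)]
    have h₁ := mul_nonneg (hγ₁nonneg r hr) (hypos r hr).le
    have h₂ := mul_nonneg (hγ₂nonneg r hr) (mul_self_nonneg (x r))
    linarith
  have hx'Z : ∀ r ∈ D, r * x' r = α r * y r - x r + x r * Z r := fun r hr => by
    rw [heq1 r hr, mul_div_assoc]
  have hy'Z : ∀ r ∈ D, r * y' r = y r * (c - β r * Z r) := fun r hr => by
    rw [heq2 r hr, mul_div_assoc]
  obtain ⟨K, hK⟩ := exists_log_lower_bound (A := fun r => α r * y r) hr₀ hb.le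
    (fun r hr => hx r (hmem₀ r hr)) (fun r hr => hy r (hmem₀ r hr))
    (fun r hr => hxpos r (hmem₀ r hr)) (fun r hr => hypos r (hmem₀ r hr))
    (fun r hr => mul_nonneg (ha.le.trans (haα r (hmem₀ r hr))) (hypos r (hmem₀ r hr)).le)
    (fun r hr => (hxpos r (hmem₀ r hr)).le.trans (hxZ r (hmem₀ r hr)))
    (fun r hr => hr₁ r ((le_max_left _ _).trans hr))
    (fun r hr => hx'Z r (hmem₀ r hr)) (fun r hr => hy'Z r (hmem₀ r hr))
  obtain ⟨r₂, hr₂⟩ := eventually_atTop.1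
    ((tendsto_log_atTop.const_mul_atTop (sub_pos.2 hbc)).eventually_ge_atTop
      (log (3 / a) + b * log 2 - K))
  have hs₀ : ∀ r, max r₀ r₂ ≤ r → r ∈ D := fun r hr => hmem₀ r ((le_max_left _ _).trans hr)
  refine not_forall_sq_div_two_le_mul_deriv (hr₀.trans_le (le_max_left r₀ r₂))
    (fun r hr => hx r (hs₀ r hr)) (fun r hr => hxpos r (hs₀ r hr)) fun r hr => ?_
  have hrD := hs₀ r hr
  have hxr := hxpos r hrD
  have hyr := hypos r hrD
  have hαy : a * y r ≤ α r * y r := mul_le_mul_of_nonneg_right (haα r hrD) hyr.le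
  have hxxZ : x r * x r ≤ x r * Z r := mul_le_mul_of_nonneg_left (hxZ r hrD) hxr.le
  rw [hx'Z r hrD]
  rcases le_total (x r) 2 with hx2 | hx2
  · have hlogx : b * log (x r) ≤ b * log 2 := mul_le_mul_of_nonneg_left (log_le_log hxr hx2) hb.le
    have hlogy : log (3 / a) ≤ log (y r) := by
      linarith [hK r ((le_max_left _ _).trans hr), hr₂ r ((le_max_right _ _).trans hr)]
    have hy3 : 3 ≤ y r * a :=
      (div_le_iff₀ ha).1 ((log_le_log_iff (by positivity) hyr).1 hlogy)
    nlinarith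
  · have : 0 < a * y r := mul_pos ha hyr
    nlinarith
end

section
/- Let R ∈ (0, ∞] and let x ∈ C¹((0,R)) with x > 0 on (0,R) satisfy the differential inequality r x'(r) ≥ x(r)(x(r) − 1) for all r ∈ (0,R). If there exists r* ∈ (0,R) with x(r*) > 1, then x(r) > 1 for all r ∈ [r*, R), and R ≤ r* · x(r*)/(x(r*) − 1). -/
open MeasureTheory Real Set

/-- If `x > 0` satisfies `r x' ≥ x (x - 1)`, then `r ↦ (1 - 1 / x r) / r` is nondecreasing. -/
lemma monotoneOn_one_sub_inv_div_of_riccati {a b : ℝ} {x x' : ℝ → ℝ} (ha : 0 < a)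
    (hx : ∀ r ∈ Icc a b, HasDerivAt x (x' r) r) (hxpos : ∀ r ∈ Icc a b, 0 < x r)
    (hineq : ∀ r ∈ Icc a b, x r * (x r - 1) ≤ r * x' r) :
    MonotoneOn (fun r ↦ (1 - (x r)⁻¹) / r) (Icc a b) := by
  have hderiv : ∀ r ∈ Icc a b, HasDerivAt (fun r ↦ (1 - (x r)⁻¹) / r)
      ((r * x' r - x r * (x r - 1)) / (x r ^ 2 * r ^ 2)) r := by
    intro r hr
    have hr0 : r ≠ 0 := (ha.trans_le hr.1).ne'
    have hxr : x r ≠ 0 := (hxpos r hr).ne'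
    refine ((((hx r hr).fun_inv hxr).const_sub 1).fun_div (hasDerivAt_id' r) hr0).congr_deriv ?_
    field_simp
  refine monotoneOn_of_hasDerivWithinAt_nonneg (convex_Icc a b)
    (fun r hr ↦ (hderiv r hr).continuousAt.continuousWithinAt)
    (fun r hr ↦ (hderiv r (interior_subset hr)).hasDerivWithinAt) fun r hr ↦ ?_
  exact div_nonneg (sub_nonneg.2 (hineq r (interior_subset hr))) (by positivity)

theorem riccati_blowup
    (R : EReal) (hR : 0 < R) (x x' : ℝ → ℝ)
    (hx : ∀ r : ℝ, 0 < r → (r : EReal) < R → HasDerivAt x (x' r) r)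
    (hx'c : ContinuousOn x' {r : ℝ | 0 < r ∧ (r : EReal) < R})
    (hxpos : ∀ r : ℝ, 0 < r → (r : EReal) < R → 0 < x r)
    (hineq : ∀ r : ℝ, 0 < r → (r : EReal) < R → x r * (x r - 1) ≤ r * x' r)
    (rstar : ℝ) (hrstar0 : 0 < rstar) (hrstarR : (rstar : EReal) < R)
    (hxstar : 1 < x rstar) :
    (∀ r : ℝ, rstar ≤ r → (r : EReal) < R → 1 < x r) ∧
      R ≤ ((rstar * x rstar / (x rstar - 1) : ℝ) : EReal) := by
  have hmono : ∀ r : ℝ, rstar ≤ r → (r : EReal) < R →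
      (1 - (x rstar)⁻¹) / rstar ≤ (1 - (x r)⁻¹) / r := by
    intro r hr hrR
    have hpos : ∀ s ∈ Icc rstar r, 0 < s := fun s hs ↦ hrstar0.trans_le hs.1
    have hlt : ∀ s ∈ Icc rstar r, (s : EReal) < R := fun s hs ↦
      (EReal.coe_le_coe_iff.2 hs.2).trans_lt hrR
    exact monotoneOn_one_sub_inv_div_of_riccati hrstar0
      (fun s hs ↦ hx s (hpos s hs) (hlt s hs)) (fun s hs ↦ hxpos s (hpos s hs) (hlt s hs))
      (fun s hs ↦ hineq s (hpos s hs) (hlt s hs)) (left_mem_Icc.2 hr) (right_mem_Icc.2 hr) hr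
  have hsub : 0 < x rstar - 1 := sub_pos.2 hxstar
  constructor
  · intro r hr hrR
    have hr0 : 0 < r := hrstar0.trans_le hr
    have hgap : 0 < (1 - (x r)⁻¹) / r :=
      (div_pos (sub_pos.2 (inv_lt_one_of_one_lt₀ hxstar)) hrstar0).trans_le (hmono r hr hrR)
    exact (inv_lt_one₀ (hxpos r hr0 hrR)).1 (sub_pos.1 ((div_pos_iff_of_pos_right hr0).1 hgap))
  · by_contra! hlt
    set B := rstar * x rstar / (x rstar - 1) with hB
    have hle : rstar ≤ B := by
      rw [hB, le_div_iff₀ hsub]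
      nlinarith
    have hB0 : 0 < B := hrstar0.trans_le hle
    have heq : (1 - (x rstar)⁻¹) / rstar = 1 / B := by
      rw [hB]
      field_simp
    have hxB : 0 < (x B)⁻¹ := inv_pos.2 (hxpos B hB0 hlt)
    have h := hmono B hle hlt
    rw [heq, div_le_div_iff_of_pos_right hB0] at h
    linarith
end

section
/- Let E₀ ∈ ℝ, c > 0, δ > 0, k > −1, m > −1 with k + m + 1 > 0, and let φ : ℝ → [0,∞) be measurable with φ(E) = 0 for E ≥ E₀ and φ(E) = c(E₀ − E)₊^k + O((E₀ − E)₊^{k+δ}) as E → E₀−. Then g_m(u) = ∫_u^{E₀} φ(E)(E − u)^m dE satisfies g_m(u) = c · c_{k,m} (E₀ − u)^{k+m+1} + O((E₀ − u)^{k+m+δ+1}) as u → E₀−, where c_{k,m} = ∫₀¹ s^k (1−s)^m ds. -/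
open MeasureTheory Real Set

/-- The real Beta integrand is integrable on the unit interval. -/
theorem intervalIntegrable_rpow_mul_one_sub_rpow {k m : ℝ} (hk : -1 < k) (hm : -1 < m) :
    IntervalIntegrable (fun s : ℝ => s ^ k * (1 - s) ^ m) volume 0 1 := by
  have h := (Complex.betaIntegral_convergent (u := ((k + 1 : ℝ) : ℂ)) (v := ((m + 1 : ℝ) : ℂ))
    (by simpa using by linarith) (by simpa using by linarith)).norm
  refine h.congr_uIoo fun s hs => ?_
  rw [uIoo_of_le zero_le_one] at hs
  have hs' : 0 < 1 - s := sub_pos.2 hs.2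
  simp only [norm_mul]
  rw [show (1 - (s : ℂ)) = ((1 - s : ℝ) : ℂ) by push_cast; ring,
    Complex.norm_cpow_eq_rpow_re_of_pos hs.1, Complex.norm_cpow_eq_rpow_re_of_pos hs']
  simp

theorem sub_rpow_mul_sub_rpow_eq_rescaled {a b x : ℝ} (hx : x ∈ Ioo a b) (k m : ℝ) :
    (b - a) ^ (k + m) * ((b / (b - a) - x / (b - a)) ^ k *
      (1 - (b / (b - a) - x / (b - a))) ^ m) = (b - x) ^ k * (x - a) ^ m := by
  have hab : 0 < b - a := sub_pos.2 (hx.1.trans hx.2)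
  have hbx : 0 < b - x := sub_pos.2 hx.2
  have hxa : 0 < x - a := sub_pos.2 hx.1
  have h₁ : b / (b - a) - x / (b - a) = (b - x) / (b - a) := by ring
  have h₂ : 1 - (b - x) / (b - a) = (x - a) / (b - a) := by field_simp; ring
  have hk : (b - a) ^ k ≠ 0 := (rpow_pos_of_pos hab k).ne'
  have hm : (b - a) ^ m ≠ 0 := (rpow_pos_of_pos hab m).ne'
  rw [h₁, h₂, div_rpow hbx.le hab.le, div_rpow hxa.le hab.le, rpow_add hab]
  field_simp

/-- The Beta integrand rescaled to `[a, b]` is integrable. -/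
theorem intervalIntegrable_sub_rpow_mul_sub_rpow {a b k m : ℝ} (hab : a < b)
    (hk : -1 < k) (hm : -1 < m) :
    IntervalIntegrable (fun x : ℝ => (b - x) ^ k * (x - a) ^ m) volume a b := by
  have hL : b - a ≠ 0 := (sub_pos.2 hab).ne'
  have h := (((intervalIntegrable_rpow_mul_one_sub_rpow hk hm).comp_sub_left
    (b / (b - a))).comp_mul_left (c := (b - a)⁻¹)).symm
  have hb : (b / (b - a) - 0) / (b - a)⁻¹ = b := by field_simp; ring
  have ha : (b / (b - a) - 1) / (b - a)⁻¹ = a := by field_simp; ring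
  rw [hb, ha] at h
  refine (h.const_mul ((b - a) ^ (k + m))).congr_uIoo fun x hx => ?_
  rw [uIoo_of_le hab.le] at hx
  simp only [← sub_rpow_mul_sub_rpow_eq_rescaled hx, div_eq_inv_mul]

/-- The Beta integral rescaled to `[a, b]`. -/
theorem integral_sub_rpow_mul_sub_rpow {a b : ℝ} (hab : a < b) (k m : ℝ) :
    ∫ x in a..b, (b - x) ^ k * (x - a) ^ m =
      (∫ s in (0:ℝ)..1, s ^ k * (1 - s) ^ m) * (b - a) ^ (k + m + 1) := by
  have hL : 0 < b - a := sub_pos.2 hab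
  rw [← intervalIntegral.integral_congr_Ioo_of_le hab.le
      fun x hx => sub_rpow_mul_sub_rpow_eq_rescaled hx k m,
    intervalIntegral.integral_const_mul,
    intervalIntegral.integral_comp_sub_div (fun s : ℝ => s ^ k * (1 - s) ^ m) hL.ne',
    sub_self, ← sub_div, div_self hL.ne', rpow_add hL (k + m), rpow_one, smul_eq_mul]
  ring

theorem gm_asymptotics
    (E₀ c δ k m : ℝ) (hc : 0 < c) (hδ : 0 < δ) (hk : -1 < k) (hm : -1 < m)
    (hkm : 0 < k + m + 1)
    (φ : ℝ → ℝ) (hmeas : Measurable φ)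
    (hnonneg : ∀ E, 0 ≤ φ E)
    (hvanish : ∀ E, E₀ ≤ E → φ E = 0)
    (hasymp : ∃ C ε : ℝ, 0 < ε ∧ ∀ E, E₀ - ε < E →
      |φ E - c * (max (E₀ - E) 0) ^ k| ≤ C * (max (E₀ - E) 0) ^ (k + δ)) :
    ∃ C ε : ℝ, 0 < ε ∧ ∀ u, E₀ - ε < u → u < E₀ →
      |(∫ E in u..E₀, φ E * (E - u) ^ m) -
          c * (∫ s in (0:ℝ)..1, s ^ k * (1 - s) ^ m) * (E₀ - u) ^ (k + m + 1)| ≤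
        C * (E₀ - u) ^ (k + m + δ + 1) := by
  obtain ⟨C, ε, hε, hφ⟩ := hasymp
  refine ⟨C * ∫ s in (0:ℝ)..1, s ^ (k + δ) * (1 - s) ^ m, ε, hε, fun u hu huE => ?_⟩
  have hmain := (intervalIntegrable_sub_rpow_mul_sub_rpow huE hk hm).const_mul c
  have hbound := (intervalIntegrable_sub_rpow_mul_sub_rpow huE
    (show -1 < k + δ by linarith) hm).const_mul C
  have hle : ∀ᵐ E : ℝ, E ∈ Ioc u E₀ →
      ‖φ E * (E - u) ^ m - c * ((E₀ - E) ^ k * (E - u) ^ m)‖ ≤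
        C * ((E₀ - E) ^ (k + δ) * (E - u) ^ m) := by
    refine .of_forall fun E hE => ?_
    have h := hφ E (hu.trans hE.1)
    rw [max_eq_left (sub_nonneg.2 hE.2)] at h
    have hpos : 0 ≤ (E - u) ^ m := rpow_nonneg (sub_nonneg.2 hE.1.le) m
    rw [← mul_assoc, ← sub_mul, norm_mul, norm_of_nonneg hpos, ← mul_assoc]
    exact mul_le_mul_of_nonneg_right h hpos
  have hdiff : IntervalIntegrable
      (fun E => φ E * (E - u) ^ m - c * ((E₀ - E) ^ k * (E - u) ^ m)) volume u E₀ := by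
    refine hbound.mono_fun' (Measurable.aestronglyMeasurable (by fun_prop)) ?_
    rw [uIoc_of_le huE.le]
    exact (ae_restrict_iff' measurableSet_Ioc).2 hle
  have hint : IntervalIntegrable (fun E => φ E * (E - u) ^ m) volume u E₀ := by
    simpa using hdiff.add hmain
  have h := intervalIntegral.norm_integral_le_of_norm_le huE.le hle hbound
  rw [intervalIntegral.integral_sub hint hmain, intervalIntegral.integral_const_mul,
    intervalIntegral.integral_const_mul, integral_sub_rpow_mul_sub_rpow huE,
    integral_sub_rpow_mul_sub_rpow huE, ← mul_assoc, ← mul_assoc, norm_eq_abs,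
    add_right_comm k δ m] at h
  exact h
end

section
/- Let n be a real number with 3 < n < 5. Then there exists a function ρ : [0,∞) → [0,∞) such that: ρ(r) = g(r²) for some C^∞ function g on [0,∞); ρ'(r) < 0 for all r > 0; ρ''(0) < 0; ρ(r) = r^{−2n/(n−1)} for all r > 1; and ∫₀¹ r² ρ(r) dr = (n−1)/(n−3). -/
open MeasureTheory Real Set

/-- The derivative of `expNegInvGlue`. -/
lemma hasDerivAt_expNegInvGlue (x : ℝ) :
    HasDerivAt expNegInvGlue (x⁻¹ ^ 2 * expNegInvGlue x) x := by
  simpa using expNegInvGlue.hasDerivAt_polynomial_eval_inv_mul 1 x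

lemma deriv_expNegInvGlue_nonneg (x : ℝ) : 0 ≤ x⁻¹ ^ 2 * expNegInvGlue x :=
  mul_nonneg (sq_nonneg _) (expNegInvGlue.nonneg x)

lemma deriv_expNegInvGlue_le_two (x : ℝ) : x⁻¹ ^ 2 * expNegInvGlue x ≤ 2 := by
  rcases le_or_gt x 0 with hx | hx
  · simp [expNegInvGlue.zero_of_nonpos hx]
  · have hexp := Real.quadratic_le_exp_of_nonneg (inv_pos.2 hx).le
    have hinv := inv_pos.2 hx
    rw [expNegInvGlue, if_neg (not_le.2 hx), Real.exp_neg, ← div_eq_mul_inv,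
      div_le_iff₀ (Real.exp_pos _)]
    nlinarith

lemma HasDerivAt.comp_sq {g : ℝ → ℝ} {g' r : ℝ} (hg : HasDerivAt g g' (r ^ 2)) :
    HasDerivAt (fun r => g (r ^ 2)) (g' * (2 * r)) r := by
  have hsq : HasDerivAt (fun r : ℝ => r ^ 2) (2 * r) r := by simpa using hasDerivAt_pow 2 r
  exact HasDerivAt.comp (h := fun r : ℝ => r ^ 2) r hg hsq

/-- The second derivative at the origin of `r ↦ g (r ^ 2)` is twice the derivative of `g` there. -/
lemma iteratedDeriv_two_comp_sq_zero {g g' : ℝ → ℝ}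
    (hg : ∀ s, 0 ≤ s → HasDerivAt g (g' s) s) (hg' : ContinuousAt g' 0) :
    iteratedDeriv 2 (fun r => g (r ^ 2)) 0 = 2 * g' 0 := by
  have hderiv : deriv (fun r => g (r ^ 2)) = fun r => g' (r ^ 2) * (2 * r) :=
    funext fun r => (hg (r ^ 2) (sq_nonneg r)).comp_sq.deriv
  rw [iteratedDeriv_succ, iteratedDeriv_one, hderiv]
  refine HasDerivAt.deriv (hasDerivAt_iff_tendsto_slope.2 ?_)
  have hcont : ContinuousAt (fun r : ℝ => 2 * g' (r ^ 2)) 0 := by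
    refine continuousAt_const.mul (ContinuousAt.comp' (g := g') ?_ (by fun_prop))
    simpa using hg'
  have hlim := hcont.tendsto.mono_left (nhdsWithin_le_nhds (s := {0}ᶜ))
  simp only [ne_eq, OfNat.ofNat_ne_zero, not_false_eq_true, zero_pow] at hlim
  refine hlim.congr' ?_
  filter_upwards [self_mem_nhdsWithin] with r hr
  have hr0 : r ≠ 0 := hr
  simp only [slope, vsub_eq_sub, smul_eq_mul]
  field_simp
  ring

/-- A smooth function with positive derivative that is positive on `[0, ∞)`, lies above the
identity, and equals the identity on `[1, ∞)`. -/
noncomputable def smoothShift (s : ℝ) : ℝ := s + expNegInvGlue (1 - s) / 4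

lemma le_smoothShift (s : ℝ) : s ≤ smoothShift s := by
  have := expNegInvGlue.nonneg (1 - s)
  unfold smoothShift
  linarith

lemma smoothShift_of_one_le {s : ℝ} (hs : 1 ≤ s) : smoothShift s = s := by
  simp [smoothShift, expNegInvGlue.zero_of_nonpos (sub_nonpos.2 hs)]

lemma smoothShift_pos {s : ℝ} (hs : 0 ≤ s) : 0 < smoothShift s := by
  rcases hs.eq_or_lt with rfl | hs
  · simpa [smoothShift] using expNegInvGlue.pos_of_pos zero_lt_one
  · exact hs.trans_le (le_smoothShift s)

lemma contDiff_expNegInvGlue_one_sub :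
    ContDiff ℝ (⊤ : ℕ∞) (fun s : ℝ => expNegInvGlue (1 - s)) :=
  expNegInvGlue.contDiff.comp (contDiff_const.sub contDiff_id)

lemma contDiff_smoothShift : ContDiff ℝ (⊤ : ℕ∞) smoothShift :=
  contDiff_id.add (contDiff_expNegInvGlue_one_sub.div_const 4)

lemma hasDerivAt_expNegInvGlue_one_sub (s : ℝ) :
    HasDerivAt (fun s : ℝ => expNegInvGlue (1 - s))
      (-((1 - s)⁻¹ ^ 2 * expNegInvGlue (1 - s))) s := by
  have h := HasDerivAt.comp (h := fun s : ℝ => 1 - s) s (hasDerivAt_expNegInvGlue (1 - s))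
    ((hasDerivAt_id s).const_sub 1)
  rwa [mul_neg_one] at h

lemma hasDerivAt_smoothShift (s : ℝ) :
    HasDerivAt smoothShift (1 - (1 - s)⁻¹ ^ 2 * expNegInvGlue (1 - s) / 4) s := by
  have h := (hasDerivAt_id s).add ((hasDerivAt_expNegInvGlue_one_sub s).div_const 4)
  rwa [neg_div, ← sub_eq_add_neg] at h

/-- A smooth decreasing modification of `s ^ (-a)` on `[0, 1]`, raised by `c` times a bump. -/
noncomputable def smoothedPower (a c s : ℝ) : ℝ :=
  smoothShift s ^ (-a) + c * expNegInvGlue (1 - s)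

/-- The derivative of `smoothedPower a c` on `[0, ∞)`. -/
noncomputable def smoothedPowerDeriv (a c s : ℝ) : ℝ :=
  (1 - (1 - s)⁻¹ ^ 2 * expNegInvGlue (1 - s) / 4) * (-a) * smoothShift s ^ (-a - 1) +
    c * -((1 - s)⁻¹ ^ 2 * expNegInvGlue (1 - s))

lemma contDiffOn_smoothedPower (a c : ℝ) :
    ContDiffOn ℝ (⊤ : ℕ∞) (smoothedPower a c) (Ici 0) :=
  (contDiff_smoothShift.contDiffOn.rpow_const_of_ne fun _ hs => (smoothShift_pos hs).ne').add
    (contDiff_const.mul contDiff_expNegInvGlue_one_sub).contDiffOn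

lemma hasDerivAt_smoothedPower (a c : ℝ) {s : ℝ} (hs : 0 ≤ s) :
    HasDerivAt (smoothedPower a c) (smoothedPowerDeriv a c s) s :=
  ((hasDerivAt_smoothShift s).rpow_const (Or.inl (smoothShift_pos hs).ne')).add
    ((hasDerivAt_expNegInvGlue_one_sub s).const_mul c)

lemma smoothedPowerDeriv_neg {a c s : ℝ} (ha : 0 < a) (hc : 0 ≤ c) (hs : 0 ≤ s) :
    smoothedPowerDeriv a c s < 0 := by
  have h0 := deriv_expNegInvGlue_nonneg (1 - s)
  have h2 := deriv_expNegInvGlue_le_two (1 - s)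
  have hpow := Real.rpow_pos_of_pos (smoothShift_pos hs) (-a - 1)
  have hmain : 0 < (1 - (1 - s)⁻¹ ^ 2 * expNegInvGlue (1 - s) / 4) * a *
      smoothShift s ^ (-a - 1) := mul_pos (mul_pos (by linarith) ha) hpow
  have hbump := mul_nonneg hc h0
  unfold smoothedPowerDeriv
  linarith

lemma continuousAt_smoothedPowerDeriv_zero (a c : ℝ) :
    ContinuousAt (smoothedPowerDeriv a c) 0 := by
  have hbump : ContinuousAt (fun s : ℝ => expNegInvGlue (1 - s)) 0 :=
    contDiff_expNegInvGlue_one_sub.continuous.continuousAt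
  have hinv : ContinuousAt (fun s : ℝ => (1 - s)⁻¹) 0 :=
    ContinuousAt.inv₀ (by fun_prop) (by norm_num)
  have hpow : ContinuousAt (fun s : ℝ => smoothShift s ^ (-a - 1)) 0 :=
    contDiff_smoothShift.continuous.continuousAt.rpow_const
      (Or.inl (smoothShift_pos le_rfl).ne')
  unfold smoothedPowerDeriv
  fun_prop

lemma continuous_smoothShift_sq_rpow (a : ℝ) :
    Continuous fun r : ℝ => smoothShift (r ^ 2) ^ (-a) :=
  (contDiff_smoothShift.continuous.comp (continuous_pow 2)).rpow_const
    fun r => Or.inl (smoothShift_pos (sq_nonneg r)).ne'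

lemma continuous_expNegInvGlue_one_sub_sq :
    Continuous fun r : ℝ => expNegInvGlue (1 - r ^ 2) :=
  contDiff_expNegInvGlue_one_sub.continuous.comp (continuous_pow 2)

lemma integral_sq_mul_smoothShift_le {a : ℝ} (ha0 : 0 < a) (ha : a < 3 / 2) :
    ∫ r in (0 : ℝ)..1, r ^ 2 * smoothShift (r ^ 2) ^ (-a) ≤ 1 / (3 - 2 * a) := by
  have hexp : -1 < 2 - 2 * a := by linarith
  have hval : ∫ r in (0 : ℝ)..1, r ^ (2 - 2 * a) = 1 / (3 - 2 * a) := by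
    rw [integral_rpow (Or.inl hexp), Real.one_rpow, Real.zero_rpow (by linarith)]
    ring_nf
  rw [← hval]
  refine intervalIntegral.integral_mono_on_of_le_Ioo zero_le_one
    (((continuous_pow 2).mul (continuous_smoothShift_sq_rpow a)).intervalIntegrable 0 1)
    (intervalIntegral.intervalIntegrable_rpow' hexp) fun r hr => ?_
  have hr0 : 0 < r := hr.1
  calc r ^ 2 * smoothShift (r ^ 2) ^ (-a)
      ≤ r ^ 2 * (r ^ 2) ^ (-a) := by
        gcongr r ^ 2 * ?_
        exact Real.rpow_le_rpow_of_nonpos (by positivity) (le_smoothShift _) (by linarith)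
    _ = r ^ (2 - 2 * a) := by
        rw [← Real.rpow_natCast r 2, ← Real.rpow_mul hr0.le, ← Real.rpow_add hr0]
        congr 1
        push_cast
        ring

lemma integral_sq_mul_expNegInvGlue_pos :
    0 < ∫ r in (0 : ℝ)..1, r ^ 2 * expNegInvGlue (1 - r ^ 2) := by
  refine intervalIntegral.intervalIntegral_pos_of_pos_on
    (((continuous_pow 2).mul continuous_expNegInvGlue_one_sub_sq).intervalIntegrable 0 1)
    (fun r hr => ?_) zero_lt_one
  have hr0 : 0 < r := hr.1
  have hr1 : r < 1 := hr.2
  exact mul_pos (by positivity) (expNegInvGlue.pos_of_pos (by nlinarith))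

lemma integral_sq_mul_smoothedPower (a c : ℝ) :
    ∫ r in (0 : ℝ)..1, r ^ 2 * smoothedPower a c (r ^ 2) =
      (∫ r in (0 : ℝ)..1, r ^ 2 * smoothShift (r ^ 2) ^ (-a)) +
        c * ∫ r in (0 : ℝ)..1, r ^ 2 * expNegInvGlue (1 - r ^ 2) := by
  have hpow : IntervalIntegrable (fun r : ℝ => r ^ 2 * smoothShift (r ^ 2) ^ (-a)) volume 0 1 :=
    ((continuous_pow 2).mul (continuous_smoothShift_sq_rpow a)).intervalIntegrable 0 1
  have hbump : IntervalIntegrable (fun r : ℝ => r ^ 2 * expNegInvGlue (1 - r ^ 2)) volume 0 1 :=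
    ((continuous_pow 2).mul continuous_expNegInvGlue_one_sub_sq).intervalIntegrable 0 1
  rw [← intervalIntegral.integral_const_mul,
    ← intervalIntegral.integral_add hpow (hbump.const_mul c)]
  congr 1
  funext r
  unfold smoothedPower
  ring

/-- For a suitable bump height, `smoothedPower` attains the integral of the singular power. -/
lemma exists_integral_sq_mul_smoothedPower {a : ℝ} (ha0 : 0 < a) (ha : a < 3 / 2) :
    ∃ c, 0 ≤ c ∧
      ∫ r in (0 : ℝ)..1, r ^ 2 * smoothedPower a c (r ^ 2) = 1 / (3 - 2 * a) := by
  have hpos := integral_sq_mul_expNegInvGlue_pos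
  refine ⟨_, div_nonneg (sub_nonneg.2 (integral_sq_mul_smoothShift_le ha0 ha)) hpos.le, ?_⟩
  rw [integral_sq_mul_smoothedPower, div_mul_cancel₀ _ hpos.ne']
  ring

theorem singular_profile_exists (n : ℝ) (hn1 : 3 < n) (hn2 : n < 5) :
    ∃ ρ : ℝ → ℝ,
      (∀ r : ℝ, 0 ≤ r → 0 ≤ ρ r) ∧
      (∃ g : ℝ → ℝ, ContDiffOn ℝ (⊤ : ℕ∞) g (Ici 0) ∧ ∀ r : ℝ, ρ r = g (r ^ 2)) ∧
      (∀ r : ℝ, 0 < r → deriv ρ r < 0) ∧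
      iteratedDeriv 2 ρ 0 < 0 ∧
      (∀ r : ℝ, 1 < r → ρ r = r ^ (-(2 * n / (n - 1)))) ∧
      (∫ r in (0:ℝ)..1, r ^ 2 * ρ r) = (n - 1) / (n - 3) := by
  have hn : 0 < n - 1 := by linarith
  have ha0 : 0 < n / (n - 1) := div_pos (by linarith) hn
  have ha : n / (n - 1) < 3 / 2 := by
    rw [div_lt_div_iff₀ hn two_pos]
    linarith
  obtain ⟨c, hc, hint⟩ := exists_integral_sq_mul_smoothedPower ha0 ha
  refine ⟨fun r => smoothedPower (n / (n - 1)) c (r ^ 2), fun r _ => ?_,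
    ⟨_, contDiffOn_smoothedPower _ c, fun _ => rfl⟩, fun r hr => ?_, ?_, fun r hr => ?_, ?_⟩
  · exact add_nonneg (Real.rpow_nonneg (smoothShift_pos (sq_nonneg r)).le _)
      (mul_nonneg hc (expNegInvGlue.nonneg _))
  · exact (hasDerivAt_smoothedPower _ c (sq_nonneg r)).comp_sq.deriv.trans_lt
      (mul_neg_of_neg_of_pos (smoothedPowerDeriv_neg ha0 hc (sq_nonneg r)) (by linarith))
  · rw [iteratedDeriv_two_comp_sq_zero (fun s hs => hasDerivAt_smoothedPower _ c hs)
      (continuousAt_smoothedPowerDeriv_zero _ c)]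
    linarith [smoothedPowerDeriv_neg ha0 hc le_rfl]
  · have hr2 : 1 ≤ r ^ 2 := by nlinarith
    simp only [smoothedPower, smoothShift_of_one_le hr2,
      expNegInvGlue.zero_of_nonpos (sub_nonpos.2 hr2), mul_zero, add_zero]
    rw [← Real.rpow_natCast r 2, ← Real.rpow_mul (by linarith)]
    congr 1
    push_cast
    ring
  · rw [hint]
    have hn3 : n - 3 ≠ 0 := by linarith
    have hden : 3 - 2 * (n / (n - 1)) = (n - 3) / (n - 1) := by
      field_simp
      ring
    rw [hden, one_div_div]
end
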